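/- arXiv:1901.05645 — 5 statements merged into one kernel-verified Lean document; each statement's English description precedes it below -/
import Mathlib

section
/- Suppose there exist θ^L < θ^H in (0,1) such that, wherever u'' exists, u''(θ) < 0 for θ ∈ [0,θ^L), u''(θ) > 0 for θ ∈ (θ^L,θ^H), and u''(θ) < 0 for θ ∈ (θ^H,1]. Fix y^L, y^H ∈ ℝ and suppose there exists an open pooling set P with Γ_P(θ^L) = y^L and Γ_P(θ^H) = y^H. Define θ_*^L as the smallest θ ∈ [θ^L,1] with Γ_{[0,θ)}(θ^L) = y^L and θ_*^H as the largest θ ∈ [0,θ^H] with Γ_{(θ,1]}(θ^H) = y^H. If θ_*^L ≤ θ_*^H, then P_* = [0,θ_*^L) ∪ (θ_*^H,1] satisfies the two constraints and is the unique maximizer of ∫_0^1 u''(θ) Γ_P(θ) dθ among all open pooling sets P with Γ_P(θ^L) = y^L and Γ_P(θ^H) = y^H: every other such P yields a strictly smaller value of this integral. -/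
open MeasureTheory Set
open scoped Classical

noncomputable section

/-- CDF associated with the density `f` (relevant on `[0,1]`): `F(x) = ∫_0^x f`. -/
def cdfF (f : ℝ → ℝ) (x : ℝ) : ℝ := ∫ t in (0:ℝ)..x, f t

/-- Conditional mean `E_F[θ | (ξ,ζ)]` of `θ` on the interval `(ξ, ζ)` under density `f`. -/
def condMean (f : ℝ → ℝ) (ξ ζ : ℝ) : ℝ :=
  (∫ t in ξ..ζ, t * f t) / (∫ t in ξ..ζ, f t)

/-- `f` is a strictly positive density of a probability measure on `[0,1]`. -/
def IsDensity (f : ℝ → ℝ) : Prop :=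
  (∀ θ ∈ Icc (0:ℝ) 1, 0 < f θ) ∧ IntegrableOn f (Icc (0:ℝ) 1) ∧
    (∫ t in (0:ℝ)..1, f t) = 1

/-- An open pooling set: a relatively open subset of `[0,1]`. -/
def IsPoolingSet (P : Set ℝ) : Prop :=
  ∃ U : Set ℝ, IsOpen U ∧ P = U ∩ Icc (0:ℝ) 1

/-- Left endpoint `ξ_i` of the interval component of `θ` in `P`. -/
def compInf (P : Set ℝ) (θ : ℝ) : ℝ := sInf (connectedComponentIn P θ)

/-- Right endpoint `ζ_i` of the interval component of `θ` in `P`. -/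
def compSup (P : Set ℝ) (θ : ℝ) : ℝ := sSup (connectedComponentIn P θ)

/-- The posterior-mean map induced by the pooling set `P`: states in a pooled
interval are mapped to the conditional mean of that interval, other states to
themselves. -/
def poolMean (f : ℝ → ℝ) (P : Set ℝ) (θ : ℝ) : ℝ :=
  if θ ∈ P then condMean f (compInf P θ) (compSup P θ) else θ

/-- The induced distribution `G_P` of posterior means. -/
def Gp (f : ℝ → ℝ) (P : Set ℝ) (θ : ℝ) : ℝ :=
  if θ ∈ P then
    (if θ < condMean f (compInf P θ) (compSup P θ) then cdfF f (compInf P θ)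
     else cdfF f (compSup P θ))
  else cdfF f θ

/-- `Γ_P(θ) = ∫_0^θ G_P(t) dt`. -/
def Gam (f : ℝ → ℝ) (P : Set ℝ) (θ : ℝ) : ℝ := ∫ t in (0:ℝ)..θ, Gp f P t

/-- The value `∫_0^1 u(θ) dG_P(θ)` of the pooling set `P` under payoff `u`,
written as the expectation of `u` composed with the posterior-mean map. -/
def poolValue (f : ℝ → ℝ) (u : ℝ → ℝ) (P : Set ℝ) : ℝ :=
  ∫ θ in (0:ℝ)..1, u (poolMean f P θ) * f θ

/-- `P` is an optimal pooling set for `u`. -/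
def IsOptimal (f : ℝ → ℝ) (u : ℝ → ℝ) (P : Set ℝ) : Prop :=
  IsPoolingSet P ∧ ∀ Q : Set ℝ, IsPoolingSet Q → poolValue f u Q ≤ poolValue f u P

/-- `u` is continuously differentiable on `[0,1]` with derivative `u'`, and `u'`
is absolutely continuous with integrable a.e. derivative `u''` (encoded via the
fundamental theorem of calculus). -/
def C1AC (u u' u'' : ℝ → ℝ) : Prop :=
  (∀ θ ∈ Icc (0:ℝ) 1, HasDerivAt u (u' θ) θ) ∧
  ContinuousOn u' (Icc (0:ℝ) 1) ∧
  IntegrableOn u'' (Icc (0:ℝ) 1) ∧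
  (∀ θ ∈ Icc (0:ℝ) 1, u' θ = u' 0 + ∫ t in (0:ℝ)..θ, u'' t)

/-!
Let `Φ = Γ_∅` be the integral of `F` and `T_w` its tangent at `w`. Every `Γ_P` is convex, equals
`Φ` off `P`, and equals `max T_a T_b` on each pooled interval `(a, b)`, because the two tangents
cross at the conditional mean. Hence `T_0, T_1 ≤ Γ_P ≤ Φ`.

The constraint fixes only `max T_0 T_b = y^L` at `θ^L`, where `b = θ_*^L`; but if `T_b` were below
`y^L` there, then by continuity some `s` between `θ^L` and `b` would meet the constraint,
contradicting minimality. So any feasible `Γ_P` meets the line `T_b` at `θ^L`, and it lies below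
`T_b` at `b`. By convexity `Γ_P ≤ T_b` on `[θ^L, b]` and `T_b ≤ Γ_P` on `[0, θ^L]`; in the
degenerate case `b = θ^L` the latter holds because `Γ_P < Φ` inside pooled intervals, so that
`θ^L` is not pooled. With the mirror image at `θ^H`, `Γ_{P_*}` is the smallest feasible `Γ_P` where
`u'' < 0` and the largest where `u'' > 0`.
-/

section IntervalIntegral

variable {g h w φ ψ : ℝ → ℝ} {s : Set ℝ} {a b c p q y z : ℝ}

theorem setIntegral_eq_intervalIntegral {E : Type*} [NormedAddCommGroup E] [NormedSpace ℝ E]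
    {μ : Measure ℝ} [NullSingletonClass μ] {g : ℝ → E} (hab : a ≤ b) (hs : Ioo a b ⊆ s)
    (hs' : s ⊆ Icc a b) : ∫ t in s, g t ∂μ = ∫ t in a..b, g t ∂μ := by
  rw [intervalIntegral.integral_of_le hab]
  refine setIntegral_congr_set (Filter.EventuallyLE.antisymm ?_ ?_)
  · exact hs'.eventuallyLE.trans Ioc_ae_eq_Icc.symm.le
  · exact Ioo_ae_eq_Ioc.symm.le.trans hs.eventuallyLE

theorem integral_ite_lt (p q : ℝ) {a m z : ℝ} (ham : a ≤ m) (haz : a ≤ z) :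
    ∫ t in a..z, (if t < m then p else q) = p * (z - a) + (q - p) * max 0 (z - m) := by
  have below {y : ℝ} (hym : y ≤ m) :
      EqOn (fun t ↦ if t < m then p else q) (fun _ ↦ p) (Ioo a y) := fun t ht ↦
    if_pos (ht.2.trans_le hym)
  rcases le_total z m with hzm | hmz
  · rw [intervalIntegral.integral_congr_Ioo_of_le haz (below hzm),
      max_eq_left (sub_nonpos.2 hzm), intervalIntegral.integral_const, smul_eq_mul]
    ring
  · have above : EqOn (fun t ↦ if t < m then p else q) (fun _ ↦ q) (Ioo m z) := fun t ht ↦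
      if_neg ht.1.not_gt
    rw [← intervalIntegral.integral_add_adjacent_intervals (b := m)
        (intervalIntegrable_const.congr_uIoo (uIoo_of_le ham ▸ (below le_rfl).symm))
        (intervalIntegrable_const.congr_uIoo (uIoo_of_le hmz ▸ above.symm)),
      intervalIntegral.integral_congr_Ioo_of_le ham (below le_rfl),
      intervalIntegral.integral_congr_Ioo_of_le hmz above,
      max_eq_right (sub_nonneg.2 hmz)]
    simp only [intervalIntegral.integral_const, smul_eq_mul]
    ring

theorem mul_sub_le_integral_of_monotoneOn (hg : MonotoneOn g (uIcc y z)) :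
    g y * (z - y) ≤ ∫ t in y..z, g t := by
  have hint := hg.intervalIntegrable (μ := volume)
  rcases le_total y z with hyz | hzy
  · rw [uIcc_of_le hyz] at hg
    calc g y * (z - y) = ∫ _ in y..z, g y := by simp [mul_comm]
      _ ≤ ∫ t in y..z, g t := intervalIntegral.integral_mono_on hyz intervalIntegrable_const hint
          fun t ht ↦ hg (left_mem_Icc.2 hyz) ht ht.1
  · rw [uIcc_of_ge hzy] at hg
    rw [intervalIntegral.integral_symm, le_neg]
    calc ∫ t in z..y, g t ≤ ∫ _ in z..y, g y :=
          intervalIntegral.integral_mono_on hzy hint.symm intervalIntegrable_const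
            fun t ht ↦ hg ht (right_mem_Icc.2 hzy) ht.2
      _ = -(g y * (z - y)) := by rw [intervalIntegral.integral_const, smul_eq_mul]; ring

theorem convexOn_primitive_of_monotoneOn (hg : MonotoneOn g (Icc a b)) (hc : c ∈ Icc a b) :
    ConvexOn ℝ (Icc a b) fun z ↦ ∫ t in c..z, g t := by
  have hmono {y z : ℝ} (hy : y ∈ Icc a b) (hz : z ∈ Icc a b) : MonotoneOn g (uIcc y z) :=
    hg.mono (uIcc_subset_Icc hy hz)
  have hsub {y z : ℝ} (hy : y ∈ Icc a b) (hz : z ∈ Icc a b) :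
      (∫ t in c..z, g t) - ∫ t in c..y, g t = ∫ t in y..z, g t :=
    intervalIntegral.integral_interval_sub_left (hmono hc hz).intervalIntegrable
      (hmono hc hy).intervalIntegrable
  refine convexOn_of_slope_mono_adjacent (convex_Icc a b) fun {x y z} hx hz hxy hyz ↦ ?_
  have hy : y ∈ Icc a b := ⟨hx.1.trans hxy.le, hyz.le.trans hz.2⟩
  have hleft : g y * (x - y) ≤ ∫ t in y..x, g t := mul_sub_le_integral_of_monotoneOn (hmono hy hx)
  have hright : g y * (z - y) ≤ ∫ t in y..z, g t := mul_sub_le_integral_of_monotoneOn (hmono hy hz)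
  rw [intervalIntegral.integral_symm] at hleft
  rw [hsub hx hy, hsub hy hz]
  calc (∫ t in x..y, g t) / (y - x) ≤ g y := (div_le_iff₀ (sub_pos.2 hxy)).2 (by linarith)
    _ ≤ (∫ t in y..z, g t) / (z - y) := (le_div_iff₀ (sub_pos.2 hyz)).2 hright

theorem integral_primitive (hg : IntervalIntegrable g volume a b) :
    ∫ x in a..b, ∫ t in a..x, g t = (b * ∫ t in a..b, g t) - ∫ t in a..b, t * g t := by
  have hprim : AbsolutelyContinuousOnInterval (fun x ↦ ∫ t in a..x, g t) a b :=
    hg.absolutelyContinuousOnInterval_intervalIntegral left_mem_uIcc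
  have hid : AbsolutelyContinuousOnInterval (fun x : ℝ ↦ x) a b :=
    LipschitzWith.id.lipschitzOnWith.absolutelyContinuousOnInterval
  have hderiv : ∫ x in a..b, x * deriv (fun x ↦ ∫ t in a..x, g t) x = ∫ x in a..b, x * g x := by
    refine intervalIntegral.integral_congr_ae ?_
    filter_upwards [hg.ae_hasDerivAt_integral] with x hx hxab
    rw [(hx (uIoc_subset_uIcc hxab) a left_mem_uIcc).deriv]
  have hparts := hid.integral_mul_deriv_eq_deriv_mul hprim
  simp only [hderiv, deriv_id'', one_mul, intervalIntegral.integral_same, mul_zero, sub_zero]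
    at hparts
  linarith

theorem ae_eq_on_Ioo_of_eqOn_primitive (hg : IntervalIntegrable g volume a b)
    (hh : IntervalIntegrable h volume a b)
    (heq : EqOn (fun z ↦ ∫ t in a..z, g t) (fun z ↦ ∫ t in a..z, h t) (Icc a b)) :
    ∀ᵐ x, x ∈ Ioo a b → g x = h x := by
  filter_upwards [hg.ae_hasDerivAt_integral, hh.ae_hasDerivAt_integral] with x hgx hhx hx
  have hxab : x ∈ uIcc a b := Icc_subset_uIcc (Ioo_subset_Icc_self hx)
  have heq_near : (fun z ↦ ∫ t in a..z, g t) =ᶠ[nhds x] fun z ↦ ∫ t in a..z, h t :=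
    Filter.eventuallyEq_of_mem (Icc_mem_nhds hx.1 hx.2) heq
  exact (hgx hxab a left_mem_uIcc).unique
    ((hhx hxab a left_mem_uIcc).congr_of_eventuallyEq heq_near)

theorem integral_mul_lt_integral_mul (hab : a < b) (hw : IntervalIntegrable w volume a b)
    (hφ : ContinuousOn φ (Icc a b)) (hψ : ContinuousOn ψ (Icc a b))
    (hsign : ∀ᵐ t ∂volume.restrict (Ioc a b), w t ≠ 0 ∧ w t * φ t ≤ w t * ψ t)
    (hne : ¬EqOn φ ψ (Icc a b)) :
    ∫ t in a..b, w t * φ t < ∫ t in a..b, w t * ψ t := by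
  rw [← uIcc_of_le hab.le] at hφ hψ
  have hwφ : IntervalIntegrable (fun t ↦ w t * φ t) volume a b := hw.mul_continuousOn hφ
  have hwψ : IntervalIntegrable (fun t ↦ w t * ψ t) volume a b := hw.mul_continuousOn hψ
  have hnonneg : 0 ≤ᵐ[volume.restrict (Ioc a b)] fun t ↦ w t * ψ t - w t * φ t := by
    filter_upwards [hsign] with t ht using sub_nonneg.2 ht.2
  rw [← sub_pos, ← intervalIntegral.integral_sub hwψ hwφ]
  refine (intervalIntegral.integral_nonneg_of_ae_restrict hab.le ?_).lt_of_ne' fun hzero ↦ hne ?_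
  · rwa [← restrict_Ioc_eq_restrict_Icc]
  rw [intervalIntegral.integral_eq_zero_iff_of_le_of_nonneg_ae hab.le hnonneg (hwψ.sub hwφ)]
    at hzero
  have hae : φ =ᵐ[volume.restrict (Ioc a b)] ψ := by
    filter_upwards [hzero, hsign] with t hzero ht
    exact (mul_left_cancel₀ ht.1 (sub_eq_zero.1 hzero)).symm
  rw [restrict_Ioc_eq_restrict_Icc] at hae
  rw [uIcc_of_le hab.le] at hφ hψ
  exact Measure.eqOn_Icc_of_ae_eq volume hab.ne hae hφ hψ

theorem integral_mul_lt_integral_mul_of_sign_changes (hab : a < b)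
    (hw : IntervalIntegrable w volume a b)
    (hφ : ContinuousOn φ (Icc a b)) (hψ : ContinuousOn ψ (Icc a b))
    (hw₁ : ∀ t ∈ Ico a p, w t < 0) (hw₂ : ∀ t ∈ Ioo p q, 0 < w t) (hw₃ : ∀ t ∈ Ioc q b, w t < 0)
    (h₁ : ∀ t ∈ Icc a p, ψ t ≤ φ t) (h₂ : ∀ t ∈ Icc p q, φ t ≤ ψ t)
    (h₃ : ∀ t ∈ Icc q b, ψ t ≤ φ t) (hne : ¬EqOn φ ψ (Icc a b)) :
    ∫ t in a..b, w t * φ t < ∫ t in a..b, w t * ψ t := by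
  refine integral_mul_lt_integral_mul hab hw hφ hψ ?_ hne
  filter_upwards [ae_restrict_of_ae (Measure.ae_ne volume p),
    ae_restrict_of_ae (Measure.ae_ne volume q), ae_restrict_mem measurableSet_Ioc]
    with t htp htq ht
  rcases htp.lt_or_gt with htp | hpt
  · have hwt := hw₁ t ⟨ht.1.le, htp⟩
    exact ⟨hwt.ne, mul_le_mul_of_nonpos_left (h₁ t ⟨ht.1.le, htp.le⟩) hwt.le⟩
  rcases htq.lt_or_gt with htq | hqt
  · have hwt := hw₂ t ⟨hpt, htq⟩
    exact ⟨hwt.ne', mul_le_mul_of_nonneg_left (h₂ t ⟨hpt.le, htq.le⟩) hwt.le⟩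
  · have hwt := hw₃ t ⟨hqt, ht.2⟩
    exact ⟨hwt.ne, mul_le_mul_of_nonpos_left (h₃ t ⟨hqt.le, ht.2⟩) hwt.le⟩

end IntervalIntegral

theorem isPoolingSet_empty : IsPoolingSet ∅ := ⟨∅, isOpen_empty, (empty_inter _).symm⟩

theorem isPoolingSet_Ico_union_Ioc {b c : ℝ} (hb : b ≤ 1) (hc : 0 ≤ c) :
    IsPoolingSet (Ico (0 : ℝ) b ∪ Ioc c 1) := by
  refine ⟨Iio b ∪ Ioi c, isOpen_Iio.union isOpen_Ioi, ?_⟩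
  ext t
  simp only [mem_union, mem_Ico, mem_Ioc, mem_inter_iff, mem_Iio, mem_Ioi, mem_Icc]
  constructor
  · rintro (⟨h0, hb⟩ | ⟨hc, h1⟩)
    · exact ⟨.inl hb, h0, by linarith⟩
    · exact ⟨.inr hc, by linarith, h1⟩
  · rintro ⟨hb | hc, h0, h1⟩
    · exact .inl ⟨h0, hb⟩
    · exact .inr ⟨hc, h1⟩

/-- `(a, b)` is one of the disjoint open intervals `(ξ_i, ζ_i)` that make up the pooling set `P`.
Being relatively open in `[0, 1]`, `P` may contain the endpoints `0` and `1` themselves. -/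
structure IsPooledInterval (P : Set ℝ) (a b : ℝ) : Prop where
  nonneg : 0 ≤ a
  lt : a < b
  le_one : b ≤ 1
  Ioo_subset : Ioo a b ⊆ P
  eq_zero_of_mem : a ∈ P → a = 0
  eq_one_of_mem : b ∈ P → b = 1

theorem isPooledInterval_Ico_union_Ioc_left {b c : ℝ} (hb : 0 < b) (hb1 : b ≤ 1) (hbc : b ≤ c) :
    IsPooledInterval (Ico 0 b ∪ Ioc c 1) 0 b where
  nonneg := le_rfl
  lt := hb
  le_one := hb1
  Ioo_subset := Ioo_subset_Ico_self.trans subset_union_left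
  eq_zero_of_mem _ := rfl
  eq_one_of_mem h := by
    rcases h with h | h
    · exact absurd h.2 (lt_irrefl b)
    · exact absurd h.1 hbc.not_gt

theorem isPooledInterval_Ico_union_Ioc_right {b c : ℝ} (hc : 0 ≤ c) (hc1 : c < 1) (hbc : b ≤ c) :
    IsPooledInterval (Ico 0 b ∪ Ioc c 1) c 1 where
  nonneg := hc
  lt := hc1
  le_one := le_rfl
  Ioo_subset := Ioo_subset_Ioc_self.trans subset_union_right
  eq_zero_of_mem h := by
    rcases h with h | h
    · exact absurd h.2 hbc.not_gt
    · exact absurd h.1 (lt_irrefl c)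
  eq_one_of_mem _ := rfl

section Components

variable {P : Set ℝ} {a b x y z : ℝ}

theorem IsPoolingSet.subset_Icc (hP : IsPoolingSet P) : P ⊆ Icc 0 1 := by
  obtain ⟨U, -, rfl⟩ := hP
  exact inter_subset_right

theorem IsPoolingSet.measurableSet (hP : IsPoolingSet P) : MeasurableSet P := by
  obtain ⟨U, hU, rfl⟩ := hP
  exact hU.measurableSet.inter measurableSet_Icc

theorem IsPoolingSet.inter_Iio (hP : IsPoolingSet P) (z : ℝ) : IsPoolingSet (P ∩ Iio z) := by
  obtain ⟨U, hU, rfl⟩ := hP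
  exact ⟨U ∩ Iio z, hU.inter isOpen_Iio, inter_right_comm _ _ _⟩

theorem isPoolingSet_connectedComponentIn (hP : IsPoolingSet P) (x : ℝ) :
    IsPoolingSet (connectedComponentIn P x) := by
  obtain ⟨U, hU, rfl⟩ := hP
  by_cases hx : x ∈ U ∩ Icc 0 1
  · refine ⟨connectedComponentIn U x, hU.connectedComponentIn, subset_antisymm ?_ ?_⟩
    · exact subset_inter (connectedComponentIn_mono x inter_subset_left)
        ((connectedComponentIn_subset _ x).trans inter_subset_right)
    · exact (isPreconnected_connectedComponentIn.ordConnected.inter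
        ordConnected_Icc).isPreconnected.subset_connectedComponentIn
        ⟨mem_connectedComponentIn hx.1, hx.2⟩
        (inter_subset_inter_left _ (connectedComponentIn_subset U x))
  · rw [connectedComponentIn_eq_empty hx]
    exact isPoolingSet_empty

theorem IsPoolingSet.eq_zero_of_isLeast (hP : IsPoolingSet P) (ha : IsLeast P a) : a = 0 := by
  obtain ⟨U, hU, rfl⟩ := hP
  obtain ⟨⟨haU, ha0, ha1⟩, hmin⟩ := ha
  by_contra hne
  have hlt : 0 < a := ha0.lt_of_ne' hne
  obtain ⟨l, hla, hlU⟩ := exists_Ioc_subset_of_mem_nhds (hU.mem_nhds haU) (exists_lt a)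
  obtain ⟨t, hlt, hta⟩ := exists_between (max_lt hla hlt)
  have ht : t ∈ U ∩ Icc 0 1 :=
    ⟨hlU ⟨(le_max_left l 0).trans_lt hlt, hta.le⟩, (le_max_right l 0).trans hlt.le,
      hta.le.trans ha1⟩
  exact hta.not_ge (hmin ht)

theorem IsPoolingSet.eq_one_of_isGreatest (hP : IsPoolingSet P) (hb : IsGreatest P b) : b = 1 := by
  obtain ⟨U, hU, rfl⟩ := hP
  obtain ⟨⟨hbU, hb0, hb1⟩, hmax⟩ := hb
  by_contra hne
  have hlt : b < 1 := hb1.lt_of_ne hne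
  obtain ⟨r, hbr, hrU⟩ := exists_Ico_subset_of_mem_nhds (hU.mem_nhds hbU) (exists_gt b)
  obtain ⟨t, hbt, htr⟩ := exists_between (lt_min hbr hlt)
  have ht : t ∈ U ∩ Icc 0 1 :=
    ⟨hrU ⟨hbt.le, htr.trans_le (min_le_left r 1)⟩, hb0.trans hbt.le,
      htr.le.trans (min_le_right r 1)⟩
  exact hbt.not_ge (hmax ht)

theorem connectedComponentIn_subset_Icc (hP : P ⊆ Icc 0 1) :
    connectedComponentIn P x ⊆ Icc (compInf P x) (compSup P x) :=
  have hC := (connectedComponentIn_subset P x).trans hP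
  subset_Icc_csInf_csSup (bddBelow_Icc.mono hC) (bddAbove_Icc.mono hC)

theorem Ioo_subset_connectedComponentIn (hP : P ⊆ Icc 0 1) (hx : x ∈ P) :
    Ioo (compInf P x) (compSup P x) ⊆ connectedComponentIn P x :=
  have hC := (connectedComponentIn_subset P x).trans hP
  (isConnected_connectedComponentIn_iff.2 hx).Ioo_csInf_csSup_subset
    (bddBelow_Icc.mono hC) (bddAbove_Icc.mono hC)

theorem mem_Icc_compInf_compSup (hP : P ⊆ Icc 0 1) (hx : x ∈ P) :
    x ∈ Icc (compInf P x) (compSup P x) :=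
  connectedComponentIn_subset_Icc hP (mem_connectedComponentIn hx)

theorem compInf_nonneg (hP : P ⊆ Icc 0 1) (hx : x ∈ P) : 0 ≤ compInf P x :=
  le_csInf ⟨x, mem_connectedComponentIn hx⟩ fun _ hy ↦ (hP (connectedComponentIn_subset P x hy)).1

theorem compSup_le_one (hP : P ⊆ Icc 0 1) (hx : x ∈ P) : compSup P x ≤ 1 :=
  csSup_le ⟨x, mem_connectedComponentIn hx⟩ fun _ hy ↦ (hP (connectedComponentIn_subset P x hy)).2

theorem compInf_mem_Icc (hP : P ⊆ Icc 0 1) (hx : x ∈ P) : compInf P x ∈ Icc 0 1 :=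
  ⟨compInf_nonneg hP hx, (mem_Icc_compInf_compSup hP hx).1.trans (hP hx).2⟩

theorem compSup_mem_Icc (hP : P ⊆ Icc 0 1) (hx : x ∈ P) : compSup P x ∈ Icc 0 1 :=
  ⟨(hP hx).1.trans (mem_Icc_compInf_compSup hP hx).2, compSup_le_one hP hx⟩

theorem le_compInf (hx : x ∈ P) (hy : y ∉ P) (hyx : y ≤ x) : y ≤ compInf P x := by
  refine le_csInf ⟨x, mem_connectedComponentIn hx⟩ fun t ht ↦ ?_
  by_contra! hty
  exact hy (connectedComponentIn_subset P x (isPreconnected_connectedComponentIn.ordConnected.out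
    ht (mem_connectedComponentIn hx) ⟨hty.le, hyx⟩))

theorem compSup_le (hx : x ∈ P) (hy : y ∉ P) (hxy : x ≤ y) : compSup P x ≤ y := by
  refine csSup_le ⟨x, mem_connectedComponentIn hx⟩ fun t ht ↦ ?_
  by_contra! hyt
  exact hy (connectedComponentIn_subset P x (isPreconnected_connectedComponentIn.ordConnected.out
    (mem_connectedComponentIn hx) ht ⟨hxy, hyt.le⟩))

theorem mem_connectedComponentIn_of_mem_closure {X : Type*} [TopologicalSpace X] {P : Set X}
    {x y : X} (hy : y ∈ P) (hyC : y ∈ closure (connectedComponentIn P x)) :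
    y ∈ connectedComponentIn P x := by
  have hx : x ∈ P := by
    by_contra hx
    simp [connectedComponentIn_eq_empty hx] at hyC
  have hpre : IsPreconnected (insert y (connectedComponentIn P x)) :=
    isPreconnected_connectedComponentIn.subset_closure (subset_insert _ _)
      (insert_subset hyC subset_closure)
  exact hpre.subset_connectedComponentIn (mem_insert_of_mem _ (mem_connectedComponentIn hx))
    (insert_subset hy (connectedComponentIn_subset P x)) (mem_insert _ _)

theorem IsPoolingSet.compInf_eq_zero (hP : IsPoolingSet P) (hx : x ∈ P) (h : compInf P x ∈ P) :
    compInf P x = 0 := by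
  have hC := (connectedComponentIn_subset P x).trans hP.subset_Icc
  refine (isPoolingSet_connectedComponentIn hP x).eq_zero_of_isLeast ⟨?_, fun t ht ↦
    (connectedComponentIn_subset_Icc hP.subset_Icc ht).1⟩
  exact mem_connectedComponentIn_of_mem_closure h
    (csInf_mem_closure ⟨x, mem_connectedComponentIn hx⟩ (bddBelow_Icc.mono hC))

theorem IsPoolingSet.compSup_eq_one (hP : IsPoolingSet P) (hx : x ∈ P) (h : compSup P x ∈ P) :
    compSup P x = 1 := by
  have hC := (connectedComponentIn_subset P x).trans hP.subset_Icc
  refine (isPoolingSet_connectedComponentIn hP x).eq_one_of_isGreatest ⟨?_, fun t ht ↦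
    (connectedComponentIn_subset_Icc hP.subset_Icc ht).2⟩
  exact mem_connectedComponentIn_of_mem_closure h
    (csSup_mem_closure ⟨x, mem_connectedComponentIn hx⟩ (bddAbove_Icc.mono hC))

theorem IsPoolingSet.isPooledInterval (hP : IsPoolingSet P) (hx : x ∈ P) :
    IsPooledInterval P (compInf P x) (compSup P x) where
  nonneg := compInf_nonneg hP.subset_Icc hx
  lt := by
    have hmem := mem_Icc_compInf_compSup hP.subset_Icc hx
    refine (hmem.1.trans hmem.2).lt_of_ne fun heq ↦ ?_
    have hinf : compInf P x = x := le_antisymm hmem.1 (heq ▸ hmem.2)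
    have hsup : compSup P x = x := heq ▸ hinf
    have hzero := hP.compInf_eq_zero hx (hinf.symm ▸ hx)
    have hone := hP.compSup_eq_one hx (hsup.symm ▸ hx)
    linarith
  le_one := compSup_le_one hP.subset_Icc hx
  Ioo_subset := (Ioo_subset_connectedComponentIn hP.subset_Icc hx).trans
    (connectedComponentIn_subset P x)
  eq_zero_of_mem := hP.compInf_eq_zero hx
  eq_one_of_mem := hP.compSup_eq_one hx

namespace IsPooledInterval

theorem le_compInf (hP : P ⊆ Icc 0 1) (hab : IsPooledInterval P a b) (hx : x ∈ Ioo a b) :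
    a ≤ compInf P x := by
  by_cases ha : a ∈ P
  · exact hab.eq_zero_of_mem ha ▸ compInf_nonneg hP (hab.Ioo_subset hx)
  · exact _root_.le_compInf (hab.Ioo_subset hx) ha hx.1.le

theorem compSup_le (hP : P ⊆ Icc 0 1) (hab : IsPooledInterval P a b) (hx : x ∈ Ioo a b) :
    compSup P x ≤ b := by
  by_cases hb : b ∈ P
  · exact hab.eq_one_of_mem hb ▸ compSup_le_one hP (hab.Ioo_subset hx)
  · exact _root_.compSup_le (hab.Ioo_subset hx) hb hx.2.le

theorem Icc_subset_Icc_comp (hP : P ⊆ Icc 0 1) (hab : IsPooledInterval P a b) (hx : x ∈ Ioo a b) :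
    Icc a b ⊆ Icc (compInf P x) (compSup P x) := by
  rw [← closure_Ioo hab.lt.ne]
  exact closure_minimal ((isPreconnected_Ioo.subset_connectedComponentIn hx hab.Ioo_subset).trans
    (connectedComponentIn_subset_Icc hP)) isClosed_Icc

theorem compInf_eq (hP : P ⊆ Icc 0 1) (hab : IsPooledInterval P a b) (hx : x ∈ Ioo a b) :
    compInf P x = a :=
  (hab.Icc_subset_Icc_comp hP hx (left_mem_Icc.2 hab.lt.le)).1.antisymm (hab.le_compInf hP hx)

theorem compSup_eq (hP : P ⊆ Icc 0 1) (hab : IsPooledInterval P a b) (hx : x ∈ Ioo a b) :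
    compSup P x = b :=
  (hab.compSup_le hP hx).antisymm (hab.Icc_subset_Icc_comp hP hx (right_mem_Icc.2 hab.lt.le)).2

theorem of_inter_Iio (hz : z ∉ P) (hab : IsPooledInterval (P ∩ Iio z) a b) :
    IsPooledInterval P a b where
  nonneg := hab.nonneg
  lt := hab.lt
  le_one := hab.le_one
  Ioo_subset := hab.Ioo_subset.trans inter_subset_left
  eq_zero_of_mem ha := by
    obtain ⟨t, ht⟩ := nonempty_Ioo.2 hab.lt
    exact hab.eq_zero_of_mem ⟨ha, ht.1.trans (hab.Ioo_subset ht).2⟩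
  eq_one_of_mem hb := by
    have hbz : b ≤ z :=
      (isLUB_Ioo hab.lt).2 fun t ht ↦ (hab.Ioo_subset ht).2.le
    exact hab.eq_one_of_mem ⟨hb, hbz.lt_of_ne fun h ↦ hz (h ▸ hb)⟩

end IsPooledInterval

theorem pairwise_disjoint_connectedComponentIn {X : Type*} [TopologicalSpace X] (P : Set X) :
    (connectedComponentIn P '' P).Pairwise Disjoint := by
  rintro _ ⟨x, -, rfl⟩ _ ⟨y, -, rfl⟩ hne
  refine disjoint_left.2 fun t htx hty ↦ hne ?_
  rw [connectedComponentIn_eq htx, connectedComponentIn_eq hty]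

theorem sUnion_connectedComponentIn {X : Type*} [TopologicalSpace X] (P : Set X) :
    ⋃₀ (connectedComponentIn P '' P) = P := by
  refine subset_antisymm ?_ fun x hx ↦ ⟨_, mem_image_of_mem _ hx, mem_connectedComponentIn hx⟩
  rintro y ⟨_, ⟨x, -, rfl⟩, hy⟩
  exact connectedComponentIn_subset P x hy

theorem IsPoolingSet.countable_components (hP : IsPoolingSet P) :
    (connectedComponentIn P '' P).Countable := by
  refine PairwiseDisjoint.countable_of_nonempty_interior (s := id)
    (pairwise_disjoint_connectedComponentIn P) ?_
  rintro _ ⟨x, hx, rfl⟩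
  have hsub := Ioo_subset_connectedComponentIn hP.subset_Icc hx
  exact (nonempty_Ioo.2 (hP.isPooledInterval hx).lt).mono (interior_maximal hsub isOpen_Ioo)

theorem IsPoolingSet.setIntegral_eq_zero {E : Type*} [NormedAddCommGroup E] [NormedSpace ℝ E]
    {μ : Measure ℝ} [NullSingletonClass μ] {g : ℝ → E} (hP : IsPoolingSet P)
    (hg : IntegrableOn g P μ) (h : ∀ a b, IsPooledInterval P a b → ∫ t in a..b, g t ∂μ = 0) :
    ∫ t in P, g t ∂μ = 0 := by
  have hUnion := (sUnion_connectedComponentIn P).symm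
  rw [sUnion_eq_iUnion] at hUnion
  have := hP.countable_components.to_subtype
  rw [hUnion] at hg ⊢
  rw [integral_iUnion ?_ (pairwise_disjoint_connectedComponentIn P).subtype hg]
  · refine (tsum_congr ?_).trans tsum_zero
    rintro ⟨_, x, hx, rfl⟩
    have hx' := hP.isPooledInterval hx
    exact (setIntegral_eq_intervalIntegral hx'.lt.le
      (Ioo_subset_connectedComponentIn hP.subset_Icc hx)
      (connectedComponentIn_subset_Icc hP.subset_Icc)).trans (h _ _ hx')
  · rintro ⟨_, x, -, rfl⟩
    exact (isPoolingSet_connectedComponentIn hP x).measurableSet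

end Components

section Density

variable {f : ℝ → ℝ} {P Q : Set ℝ} {a b w x y z : ℝ}

namespace IsDensity

theorem intervalIntegrable (hf : IsDensity f) (ha : a ∈ Icc (0 : ℝ) 1) (hb : b ∈ Icc (0 : ℝ) 1) :
    IntervalIntegrable f volume a b :=
  (hf.2.1.mono_set (uIcc_subset_Icc ha hb)).intervalIntegrable

theorem cdfF_sub_cdfF (hf : IsDensity f) (ha : a ∈ Icc (0 : ℝ) 1) (hb : b ∈ Icc (0 : ℝ) 1) :
    cdfF f b - cdfF f a = ∫ t in a..b, f t :=
  intervalIntegral.integral_interval_sub_left (hf.intervalIntegrable unitInterval.zero_mem hb)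
    (hf.intervalIntegrable unitInterval.zero_mem ha)

theorem strictMonoOn_cdfF (hf : IsDensity f) : StrictMonoOn (cdfF f) (Icc 0 1) := by
  intro a ha b hb hab
  rw [← sub_pos, hf.cdfF_sub_cdfF ha hb]
  exact intervalIntegral.intervalIntegral_pos_of_pos_on (hf.intervalIntegrable ha hb)
    (fun t ht ↦ hf.1 t ⟨ha.1.trans ht.1.le, ht.2.le.trans hb.2⟩) hab

theorem monotoneOn_cdfF (hf : IsDensity f) : MonotoneOn (cdfF f) (Icc 0 1) :=
  hf.strictMonoOn_cdfF.monotoneOn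

theorem continuousOn_cdfF (hf : IsDensity f) : ContinuousOn (cdfF f) (Icc 0 1) := by
  rw [← uIcc_of_le zero_le_one]
  exact intervalIntegral.continuousOn_primitive_interval'
    (hf.intervalIntegrable unitInterval.zero_mem unitInterval.one_mem) left_mem_uIcc

end IsDensity

theorem Gp_of_notMem (hx : x ∉ P) : Gp f P x = cdfF f x := if_neg hx

theorem cdfF_le_Gp (hf : IsDensity f) (hP : P ⊆ Icc 0 1) (hw : w ∈ Icc (0 : ℝ) 1) (hwP : w ∉ P)
    (hx : x ∈ Icc (0 : ℝ) 1) (hwx : w ≤ x) : cdfF f w ≤ Gp f P x := by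
  by_cases hxP : x ∈ P
  · have hinf := compInf_mem_Icc hP hxP
    have hsup := compSup_mem_Icc hP hxP
    have hwinf : w ≤ compInf P x := le_compInf hxP hwP hwx
    rw [Gp, if_pos hxP]
    split_ifs
    · exact hf.monotoneOn_cdfF hw hinf hwinf
    · exact hf.monotoneOn_cdfF hw hsup (hwx.trans (mem_Icc_compInf_compSup hP hxP).2)
  · rw [Gp_of_notMem hxP]
    exact hf.monotoneOn_cdfF hw hx hwx

theorem Gp_le_cdfF (hf : IsDensity f) (hP : P ⊆ Icc 0 1) (hw : w ∈ Icc (0 : ℝ) 1) (hwP : w ∉ P)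
    (hx : x ∈ Icc (0 : ℝ) 1) (hxw : x ≤ w) : Gp f P x ≤ cdfF f w := by
  by_cases hxP : x ∈ P
  · have hinf := compInf_mem_Icc hP hxP
    have hsup := compSup_mem_Icc hP hxP
    have hsupw : compSup P x ≤ w := compSup_le hxP hwP hxw
    rw [Gp, if_pos hxP]
    split_ifs
    · exact hf.monotoneOn_cdfF hinf hw ((mem_Icc_compInf_compSup hP hxP).1.trans hxw)
    · exact hf.monotoneOn_cdfF hsup hw hsupw
  · rw [Gp_of_notMem hxP]
    exact hf.monotoneOn_cdfF hx hw hxw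

theorem monotoneOn_Gp (hf : IsDensity f) (hP : P ⊆ Icc 0 1) :
    MonotoneOn (Gp f P) (Icc 0 1) := by
  intro x hx y hy hxy
  by_cases hsub : Icc x y ⊆ P
  · have hxP : x ∈ P := hsub (left_mem_Icc.2 hxy)
    have hyP : y ∈ P := hsub (right_mem_Icc.2 hxy)
    have hcomp : connectedComponentIn P y = connectedComponentIn P x :=
      (connectedComponentIn_eq (isPreconnected_Icc.subset_connectedComponentIn
        (left_mem_Icc.2 hxy) hsub (right_mem_Icc.2 hxy))).symm
    have hmem := mem_Icc_compInf_compSup hP hxP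
    have hmono : cdfF f (compInf P x) ≤ cdfF f (compSup P x) :=
      hf.monotoneOn_cdfF (compInf_mem_Icc hP hxP) (compSup_mem_Icc hP hxP) (hmem.1.trans hmem.2)
    have hGy : Gp f P y = if y < condMean f (compInf P x) (compSup P x)
        then cdfF f (compInf P x) else cdfF f (compSup P x) := by
      rw [Gp, if_pos hyP, compInf, compSup, hcomp]
      rfl
    rw [hGy, Gp, if_pos hxP]
    split_ifs with hx' hy' hy'
    · exact le_rfl
    · exact hmono
    · exact absurd (hxy.trans_lt hy') hx'
    · exact le_rfl
  · obtain ⟨w, hw, hwP⟩ := not_subset.1 hsub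
    have hw01 : w ∈ Icc (0 : ℝ) 1 := ⟨hx.1.trans hw.1, hw.2.trans hy.2⟩
    exact (Gp_le_cdfF hf hP hw01 hwP hx hw.1).trans (cdfF_le_Gp hf hP hw01 hwP hy hw.2)

theorem intervalIntegrable_Gp (hf : IsDensity f) (hP : P ⊆ Icc 0 1) (ha : a ∈ Icc (0 : ℝ) 1)
    (hb : b ∈ Icc (0 : ℝ) 1) : IntervalIntegrable (Gp f P) volume a b :=
  ((monotoneOn_Gp hf hP).mono (uIcc_subset_Icc ha hb)).intervalIntegrable

theorem Gam_sub_Gam (hf : IsDensity f) (hP : P ⊆ Icc 0 1) (hy : y ∈ Icc (0 : ℝ) 1)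
    (hz : z ∈ Icc (0 : ℝ) 1) : Gam f P z - Gam f P y = ∫ t in y..z, Gp f P t :=
  intervalIntegral.integral_interval_sub_left (intervalIntegrable_Gp hf hP unitInterval.zero_mem hz)
    (intervalIntegrable_Gp hf hP unitInterval.zero_mem hy)

theorem convexOn_Gam (hf : IsDensity f) (hP : P ⊆ Icc 0 1) : ConvexOn ℝ (Icc 0 1) (Gam f P) :=
  convexOn_primitive_of_monotoneOn (monotoneOn_Gp hf hP) unitInterval.zero_mem

theorem continuousOn_Gam (hf : IsDensity f) (hP : P ⊆ Icc 0 1) :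
    ContinuousOn (Gam f P) (Icc 0 1) := by
  rw [← uIcc_of_le zero_le_one]
  exact intervalIntegral.continuousOn_primitive_interval' (intervalIntegrable_Gp hf hP
    unitInterval.zero_mem unitInterval.one_mem) left_mem_uIcc

theorem Gam_add_Gp_mul_sub_le (hf : IsDensity f) (hP : P ⊆ Icc 0 1) (hy : y ∈ Icc (0 : ℝ) 1)
    (hz : z ∈ Icc (0 : ℝ) 1) : Gam f P y + Gp f P y * (z - y) ≤ Gam f P z := by
  rw [← le_sub_iff_add_le', Gam_sub_Gam hf hP hy hz]
  exact mul_sub_le_integral_of_monotoneOn ((monotoneOn_Gp hf hP).mono (uIcc_subset_Icc hy hz))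

theorem Gam_eq_of_eqOn (hf : IsDensity f) (hP : P ⊆ Icc 0 1) (hQ : Q ⊆ Icc 0 1)
    (h : EqOn (Gam f P) (Gam f Q) (Icc 0 1)) : Gam f P = Gam f Q := by
  have hinside := ae_eq_on_Ioo_of_eqOn_primitive
    (intervalIntegrable_Gp hf hP unitInterval.zero_mem unitInterval.one_mem)
    (intervalIntegrable_Gp hf hQ unitInterval.zero_mem unitInterval.one_mem) h
  have hae : Gp f P =ᵐ[volume] Gp f Q := by
    filter_upwards [hinside, Measure.ae_ne volume 0, Measure.ae_ne volume 1] with x hx h0 h1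
    by_cases hx01 : x ∈ Icc (0 : ℝ) 1
    · exact hx ⟨hx01.1.lt_of_ne' h0, hx01.2.lt_of_ne h1⟩
    · rw [Gp_of_notMem fun hxP ↦ hx01 (hP hxP), Gp_of_notMem fun hxQ ↦ hx01 (hQ hxQ)]
  funext z
  exact intervalIntegral.integral_congr_ae (hae.mono fun _ hx _ ↦ hx)

end Density

section TangentLine

variable {f : ℝ → ℝ} {P : Set ℝ} {a b w x z : ℝ}

/-- The tangent at `w` to `Γ_∅`, the integral of `F` itself: `Γ_P` follows two such lines on each
pooled interval of `P`. -/
def tangentLine (f : ℝ → ℝ) (w z : ℝ) : ℝ := Gam f ∅ w + cdfF f w * (z - w)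

theorem Gp_empty : Gp f ∅ = cdfF f := funext fun _ ↦ Gp_of_notMem (notMem_empty _)

theorem tangentLine_self : tangentLine f w w = Gam f ∅ w := by simp [tangentLine]

theorem tangentLine_le_Gam_empty (hf : IsDensity f) (hw : w ∈ Icc (0 : ℝ) 1)
    (hz : z ∈ Icc (0 : ℝ) 1) : tangentLine f w z ≤ Gam f ∅ z := by
  simpa only [tangentLine, Gp_empty] using Gam_add_Gp_mul_sub_le hf (empty_subset _) hw hz

theorem tangentLine_le_tangentLine (hf : IsDensity f) (hw : w ∈ Icc (0 : ℝ) 1)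
    (ha : a ∈ Icc (0 : ℝ) 1) (haz : a ∈ uIcc w z) : tangentLine f w z ≤ tangentLine f a z := by
  have hslope : cdfF f w * (z - a) ≤ cdfF f a * (z - a) := by
    rcases mem_uIcc.1 haz with ⟨hwa, haz⟩ | ⟨hza, haw⟩
    · exact mul_le_mul_of_nonneg_right (hf.monotoneOn_cdfF hw ha hwa) (sub_nonneg.2 haz)
    · exact mul_le_mul_of_nonpos_right (hf.monotoneOn_cdfF ha hw haw) (sub_nonpos.2 hza)
  calc tangentLine f w z = tangentLine f w a + cdfF f w * (z - a) := by unfold tangentLine; ring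
    _ ≤ tangentLine f a z := add_le_add (tangentLine_le_Gam_empty hf hw ha) hslope

theorem tangentLine_lt_Gam_empty (hf : IsDensity f) (hw : w ∈ Icc (0 : ℝ) 1)
    (hz : z ∈ Icc (0 : ℝ) 1) (hne : w ≠ z) : tangentLine f w z < Gam f ∅ z := by
  obtain ⟨a, ha, hslope⟩ : ∃ a ∈ Icc (0 : ℝ) 1, cdfF f w * (z - a) < cdfF f a * (z - a) := by
    rcases hne.lt_or_gt with hlt | hlt
    · obtain ⟨a, hwa, haz⟩ := exists_between hlt
      have ha : a ∈ Icc (0 : ℝ) 1 := ⟨hw.1.trans hwa.le, haz.le.trans hz.2⟩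
      exact ⟨a, ha, mul_lt_mul_of_pos_right (hf.strictMonoOn_cdfF hw ha hwa) (sub_pos.2 haz)⟩
    · obtain ⟨a, hza, haw⟩ := exists_between hlt
      have ha : a ∈ Icc (0 : ℝ) 1 := ⟨hz.1.trans hza.le, haw.le.trans hw.2⟩
      exact ⟨a, ha, mul_lt_mul_of_neg_right (hf.strictMonoOn_cdfF ha hw haw) (sub_neg.2 hza)⟩
  calc tangentLine f w z = tangentLine f w a + cdfF f w * (z - a) := by unfold tangentLine; ring
    _ < tangentLine f a z := add_lt_add_of_le_of_lt (tangentLine_le_Gam_empty hf hw ha) hslope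
    _ ≤ Gam f ∅ z := tangentLine_le_Gam_empty hf ha hz

theorem continuousOn_tangentLine (hf : IsDensity f) (z : ℝ) :
    ContinuousOn (fun w ↦ tangentLine f w z) (Icc 0 1) :=
  (continuousOn_Gam hf (empty_subset _)).add
    (hf.continuousOn_cdfF.mul (continuousOn_const.sub continuousOn_id))

theorem tangentLine_sub_tangentLine (hf : IsDensity f) (ha : a ∈ Icc (0 : ℝ) 1)
    (hb : b ∈ Icc (0 : ℝ) 1) (hab : a < b) (z : ℝ) :
    tangentLine f b z - tangentLine f a z =
      (cdfF f b - cdfF f a) * (z - condMean f a b) := by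
  have hmass : 0 < ∫ t in a..b, f t := by
    rw [← hf.cdfF_sub_cdfF ha hb]
    exact sub_pos.2 (hf.strictMonoOn_cdfF ha hb hab)
  have hmean : (∫ t in a..b, f t) * condMean f a b = ∫ t in a..b, t * f t :=
    mul_div_cancel₀ _ hmass.ne'
  have hgap : Gam f ∅ b - Gam f ∅ a = cdfF f a * (b - a) +
      ((b * ∫ t in a..b, f t) - ∫ t in a..b, t * f t) := by
    rw [Gam_sub_Gam hf (empty_subset _) ha hb, Gp_empty,
      ← integral_primitive (hf.intervalIntegrable ha hb)]
    have hincr : ∫ x in a..b, ∫ t in a..x, f t = ∫ x in a..b, (cdfF f x - cdfF f a) :=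
      intervalIntegral.integral_congr fun x hx ↦
        (hf.cdfF_sub_cdfF ha (uIcc_subset_Icc ha hb hx)).symm
    rw [hincr, intervalIntegral.integral_sub
      (hf.monotoneOn_cdfF.mono (uIcc_subset_Icc ha hb)).intervalIntegrable intervalIntegrable_const,
      intervalIntegral.integral_const, smul_eq_mul]
    ring
  unfold tangentLine
  rw [← hf.cdfF_sub_cdfF ha hb] at hmean hgap
  linear_combination hgap + hmean

theorem condMean_mem_Icc (hf : IsDensity f) (ha : a ∈ Icc (0 : ℝ) 1) (hb : b ∈ Icc (0 : ℝ) 1)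
    (hab : a < b) : condMean f a b ∈ Icc a b := by
  have hmass : 0 < cdfF f b - cdfF f a := sub_pos.2 (hf.strictMonoOn_cdfF ha hb hab)
  have hle_a : (cdfF f b - cdfF f a) * (a - condMean f a b) ≤ 0 := by
    rw [← tangentLine_sub_tangentLine hf ha hb hab, tangentLine_self]
    exact sub_nonpos.2 (tangentLine_le_Gam_empty hf hb ha)
  have hge_b : 0 ≤ (cdfF f b - cdfF f a) * (b - condMean f a b) := by
    rw [← tangentLine_sub_tangentLine hf ha hb hab, tangentLine_self]
    exact sub_nonneg.2 (tangentLine_le_Gam_empty hf ha hb)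
  exact ⟨sub_nonpos.1 (nonpos_of_mul_nonpos_right hle_a hmass),
    sub_nonneg.1 (nonneg_of_mul_nonneg_right hge_b hmass)⟩

namespace IsPooledInterval

theorem left_mem_Icc (hab : IsPooledInterval P a b) : a ∈ Icc (0 : ℝ) 1 :=
  ⟨hab.nonneg, hab.lt.le.trans hab.le_one⟩

theorem right_mem_Icc (hab : IsPooledInterval P a b) : b ∈ Icc (0 : ℝ) 1 :=
  ⟨hab.nonneg.trans hab.lt.le, hab.le_one⟩

theorem Gp_eq (hP : P ⊆ Icc 0 1) (hab : IsPooledInterval P a b) (hx : x ∈ Ioo a b) :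
    Gp f P x = if x < condMean f a b then cdfF f a else cdfF f b := by
  rw [Gp, if_pos (hab.Ioo_subset hx), hab.compInf_eq hP hx, hab.compSup_eq hP hx]

theorem integral_Gp (hf : IsDensity f) (hP : P ⊆ Icc 0 1) (hab : IsPooledInterval P a b)
    (hz : z ∈ Icc a b) :
    ∫ t in a..z, Gp f P t = max (tangentLine f a z) (tangentLine f b z) - Gam f ∅ a := by
  have ha := hab.left_mem_Icc
  have hb := hab.right_mem_Icc
  have hmass : 0 ≤ cdfF f b - cdfF f a := sub_nonneg.2 (hf.monotoneOn_cdfF ha hb hab.lt.le)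
  calc ∫ t in a..z, Gp f P t
      = ∫ t in a..z, if t < condMean f a b then cdfF f a else cdfF f b :=
        intervalIntegral.integral_congr_Ioo_of_le hz.1 fun t ht ↦
          hab.Gp_eq hP ⟨ht.1, ht.2.trans_le hz.2⟩
    _ = cdfF f a * (z - a) + (cdfF f b - cdfF f a) * max 0 (z - condMean f a b) :=
        integral_ite_lt _ _ (condMean_mem_Icc hf ha hb hab.lt).1 hz.1
    _ = cdfF f a * (z - a) + max 0 (tangentLine f b z - tangentLine f a z) := by
        rw [tangentLine_sub_tangentLine hf ha hb hab.lt, mul_max_of_nonneg _ _ hmass, mul_zero]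
    _ = max (tangentLine f a z) (tangentLine f b z) - Gam f ∅ a := by
        have hline : cdfF f a * (z - a) = tangentLine f a z - Gam f ∅ a :=
          (add_sub_cancel_left _ _).symm
        rw [hline, ← sub_self (tangentLine f a z), max_sub_sub_right]
        ring

theorem integral_Gp_sub_cdfF (hf : IsDensity f) (hP : P ⊆ Icc 0 1) (hab : IsPooledInterval P a b) :
    ∫ t in a..b, (Gp f P t - cdfF f t) = 0 := by
  have ha := hab.left_mem_Icc
  have hb := hab.right_mem_Icc
  have hcdf : ∫ t in a..b, cdfF f t = Gam f ∅ b - Gam f ∅ a := by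
    rw [Gam_sub_Gam hf (empty_subset _) ha hb, Gp_empty]
  rw [intervalIntegral.integral_sub (intervalIntegrable_Gp hf hP ha hb)
    (hf.monotoneOn_cdfF.mono (uIcc_subset_Icc ha hb)).intervalIntegrable, hcdf,
    hab.integral_Gp hf hP ⟨hab.lt.le, le_rfl⟩, tangentLine_self,
    max_eq_right (tangentLine_le_Gam_empty hf ha hb), sub_self]

end IsPooledInterval

theorem Gam_eq_Gam_empty_of_notMem (hf : IsDensity f) (hP : IsPoolingSet P)
    (hz : z ∈ Icc (0 : ℝ) 1) (hzP : z ∉ P) : Gam f P z = Gam f ∅ z := by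
  have hGp := intervalIntegrable_Gp hf hP.subset_Icc unitInterval.zero_mem hz
  have hcdf := (hf.monotoneOn_cdfF.mono
    (uIcc_subset_Icc unitInterval.zero_mem hz)).intervalIntegrable (μ := volume)
  have hPz : P ∩ Iio z ⊆ Icc 0 z := fun t ht ↦ ⟨(hP.subset_Icc ht.1).1, ht.2.le⟩
  have hoff : ∀ t ∈ Icc 0 z \ (P ∩ Iio z), Gp f P t - cdfF f t = 0 := by
    rintro t ⟨ht, htP⟩
    refine sub_eq_zero.2 (Gp_of_notMem fun htP' ↦ htP ⟨htP', ht.2.lt_of_ne ?_⟩)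
    rintro rfl
    exact hzP htP'
  rw [← sub_eq_zero, Gam, Gam, Gp_empty, ← intervalIntegral.integral_sub hGp hcdf,
    ← setIntegral_eq_intervalIntegral hz.1 Ioo_subset_Icc_self subset_rfl,
    setIntegral_eq_of_subset_of_forall_sdiff_eq_zero measurableSet_Icc hPz hoff]
  refine (hP.inter_Iio z).setIntegral_eq_zero ?_ fun a b hab ↦
    (hab.of_inter_Iio hzP).integral_Gp_sub_cdfF hf hP.subset_Icc
  exact ((intervalIntegrable_iff_integrableOn_Icc_of_le hz.1).1 (hGp.sub hcdf)).mono_set hPz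

theorem IsPooledInterval.Gam_left (hf : IsDensity f) (hP : IsPoolingSet P)
    (hab : IsPooledInterval P a b) : Gam f P a = Gam f ∅ a := by
  by_cases ha : a ∈ P
  · simp only [hab.eq_zero_of_mem ha, Gam, intervalIntegral.integral_same]
  · exact Gam_eq_Gam_empty_of_notMem hf hP hab.left_mem_Icc ha

theorem IsPooledInterval.Gam_eq_max (hf : IsDensity f) (hP : IsPoolingSet P)
    (hab : IsPooledInterval P a b) (hz : z ∈ Icc a b) :
    Gam f P z = max (tangentLine f a z) (tangentLine f b z) := by
  have hz01 : z ∈ Icc (0 : ℝ) 1 := ⟨hab.nonneg.trans hz.1, hz.2.trans hab.le_one⟩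
  have hincr := Gam_sub_Gam hf hP.subset_Icc hab.left_mem_Icc hz01
  rw [hab.integral_Gp hf hP.subset_Icc hz, hab.Gam_left hf hP] at hincr
  exact sub_left_injective hincr

theorem Gam_le_Gam_empty (hf : IsDensity f) (hP : IsPoolingSet P) (hz : z ∈ Icc (0 : ℝ) 1) :
    Gam f P z ≤ Gam f ∅ z := by
  by_cases hzP : z ∈ P
  · have hab := hP.isPooledInterval hzP
    rw [hab.Gam_eq_max hf hP (mem_Icc_compInf_compSup hP.subset_Icc hzP)]
    exact max_le (tangentLine_le_Gam_empty hf hab.left_mem_Icc hz)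
      (tangentLine_le_Gam_empty hf hab.right_mem_Icc hz)
  · exact (Gam_eq_Gam_empty_of_notMem hf hP hz hzP).le

theorem tangentLine_le_Gam (hf : IsDensity f) (hP : IsPoolingSet P) (hw : w ∈ Icc (0 : ℝ) 1)
    (hwP : ∀ a b, IsPooledInterval P a b → w ∉ Ioo a b) (hz : z ∈ Icc (0 : ℝ) 1) :
    tangentLine f w z ≤ Gam f P z := by
  by_cases hzP : z ∈ P
  · have hab := hP.isPooledInterval hzP
    have hzab := mem_Icc_compInf_compSup hP.subset_Icc hzP
    rw [hab.Gam_eq_max hf hP hzab, le_max_iff]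
    rcases le_or_gt w (compInf P z) with hwa | haw
    · exact .inl (tangentLine_le_tangentLine hf hw hab.left_mem_Icc
        (mem_uIcc.2 (.inl ⟨hwa, hzab.1⟩)))
    · have hbw : compSup P z ≤ w := not_lt.1 fun hwb ↦ hwP _ _ hab ⟨haw, hwb⟩
      exact .inr (tangentLine_le_tangentLine hf hw hab.right_mem_Icc
        (mem_uIcc.2 (.inr ⟨hzab.2, hbw⟩)))
  · rw [Gam_eq_Gam_empty_of_notMem hf hP hz hzP]
    exact tangentLine_le_Gam_empty hf hw hz

theorem tangentLine_zero_le_Gam (hf : IsDensity f) (hP : IsPoolingSet P) (hz : z ∈ Icc (0 : ℝ) 1) :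
    tangentLine f 0 z ≤ Gam f P z :=
  tangentLine_le_Gam hf hP unitInterval.zero_mem (fun _ _ hab h ↦ h.1.not_ge hab.nonneg) hz

theorem tangentLine_one_le_Gam (hf : IsDensity f) (hP : IsPoolingSet P) (hz : z ∈ Icc (0 : ℝ) 1) :
    tangentLine f 1 z ≤ Gam f P z :=
  tangentLine_le_Gam hf hP unitInterval.one_mem (fun _ _ hab h ↦ h.2.not_ge hab.le_one) hz

theorem convexOn_Gam_sub_tangentLine (hf : IsDensity f) (hP : P ⊆ Icc 0 1) (w : ℝ) :
    ConvexOn ℝ (Icc 0 1) fun z ↦ Gam f P z - tangentLine f w z := by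
  refine (convexOn_Gam hf hP).sub ((((LinearMap.mul ℝ ℝ (cdfF f w)).concaveOn
    (convex_Icc 0 1)).add_const (Gam f ∅ w - cdfF f w * w)).congr fun z _ ↦ ?_)
  simp only [Pi.add_apply, LinearMap.mul_apply_apply, tangentLine]
  ring

theorem Gam_le_tangentLine_self (hf : IsDensity f) (hP : IsPoolingSet P)
    (hw : w ∈ Icc (0 : ℝ) 1) : Gam f P w ≤ tangentLine f w w :=
  (Gam_le_Gam_empty hf hP hw).trans_eq tangentLine_self.symm

theorem Gam_le_tangentLine (hf : IsDensity f) (hP : IsPoolingSet P) (hb : b ∈ Icc (0 : ℝ) 1)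
    (hx : x ∈ Icc (0 : ℝ) 1) (hxb : Gam f P x ≤ tangentLine f b x) (hz : z ∈ uIcc x b) :
    Gam f P z ≤ tangentLine f b z := by
  have hmax := (convexOn_Gam_sub_tangentLine hf hP.subset_Icc b).le_max_of_mem_segment hx hb
    (segment_eq_uIcc (𝕜 := ℝ) x b ▸ hz)
  exact sub_nonpos.1 (hmax.trans
    (max_le (sub_nonpos.2 hxb) (sub_nonpos.2 (Gam_le_tangentLine_self hf hP hb))))

theorem IsPooledInterval.Gam_lt_Gam_empty (hf : IsDensity f) (hP : IsPoolingSet P)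
    (hab : IsPooledInterval P a b) (hz : z ∈ Ioo a b) : Gam f P z < Gam f ∅ z := by
  have hz01 : z ∈ Icc (0 : ℝ) 1 := hP.subset_Icc (hab.Ioo_subset hz)
  rw [hab.Gam_eq_max hf hP (Ioo_subset_Icc_self hz)]
  exact max_lt (tangentLine_lt_Gam_empty hf hab.left_mem_Icc hz01 hz.1.ne)
    (tangentLine_lt_Gam_empty hf hab.right_mem_Icc hz01 hz.2.ne')

theorem tangentLine_le_Gam_of_mem_uIcc (hf : IsDensity f) (hP : IsPoolingSet P)
    (hb : b ∈ Icc (0 : ℝ) 1) (hz : z ∈ Icc (0 : ℝ) 1) (hx : x ∈ uIcc z b)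
    (hxb : Gam f P x = tangentLine f b x) : tangentLine f b z ≤ Gam f P z := by
  rcases eq_or_ne b x with rfl | hbx
  · rw [tangentLine_self] at hxb
    exact tangentLine_le_Gam hf hP hb
      (fun _ _ hab hbab ↦ (hab.Gam_lt_Gam_empty hf hP hbab).ne hxb) hz
  rcases eq_or_ne z x with rfl | hzx
  · exact hxb.ge
  have hseg : x ∈ openSegment ℝ z b :=
    mem_openSegment_of_ne_left_right hzx hbx (segment_eq_uIcc (𝕜 := ℝ) z b ▸ hx)
  have hxz := (convexOn_Gam_sub_tangentLine hf hP.subset_Icc b).le_left_of_right_le hz hb hseg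
    (by simp only [hxb, sub_self, sub_nonpos, Gam_le_tangentLine_self hf hP hb])
  rwa [hxb, sub_self, sub_nonneg] at hxz

end TangentLine

section PooledTails

variable {f : ℝ → ℝ} {P : Set ℝ} {b c k x y z θ : ℝ}

theorem Gam_Ico_union_Ioc_of_le_left (hf : IsDensity f) (hb : 0 < b) (hb1 : b ≤ 1) (hbc : b ≤ c)
    (hz : z ∈ Icc 0 b) :
    Gam f (Ico 0 b ∪ Ioc c 1) z = max (tangentLine f 0 z) (tangentLine f b z) :=
  (isPooledInterval_Ico_union_Ioc_left hb hb1 hbc).Gam_eq_max hf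
    (isPoolingSet_Ico_union_Ioc hb1 (hb.le.trans hbc)) hz

theorem Gam_Ico_union_Ioc_of_right_le (hf : IsDensity f) (hc : 0 ≤ c) (hc1 : c < 1) (hbc : b ≤ c)
    (hz : z ∈ Icc c 1) :
    Gam f (Ico 0 b ∪ Ioc c 1) z = max (tangentLine f c z) (tangentLine f 1 z) :=
  (isPooledInterval_Ico_union_Ioc_right hc hc1 hbc).Gam_eq_max hf
    (isPoolingSet_Ico_union_Ioc (hbc.trans hc1.le) hc) hz

theorem Gam_Ico_union_Ioc_of_mem_Icc (hf : IsDensity f) (hb : 0 ≤ b) (hc : c ≤ 1)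
    (hz : z ∈ Icc b c) : Gam f (Ico 0 b ∪ Ioc c 1) z = Gam f ∅ z := by
  have hbc : b ≤ c := hz.1.trans hz.2
  refine Gam_eq_Gam_empty_of_notMem hf (isPoolingSet_Ico_union_Ioc (hbc.trans hc) (hb.trans hbc))
    ⟨hb.trans hz.1, hz.2.trans hc⟩ ?_
  rintro (h | h)
  · exact h.2.not_ge hz.1
  · exact h.1.not_ge hz.2

theorem Gam_Ico (hf : IsDensity f) (hb : 0 < b) (hb1 : b ≤ 1) (hz : z ∈ Icc 0 b) :
    Gam f (Ico 0 b) z = max (tangentLine f 0 z) (tangentLine f b z) := by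
  simpa only [Ioc_self, union_empty] using Gam_Ico_union_Ioc_of_le_left hf hb hb1 hb1 hz

theorem Gam_Ioc (hf : IsDensity f) (hc : 0 ≤ c) (hc1 : c < 1) (hz : z ∈ Icc c 1) :
    Gam f (Ioc c 1) z = max (tangentLine f c z) (tangentLine f 1 z) := by
  simpa only [Ico_self, empty_union] using Gam_Ico_union_Ioc_of_right_le hf hc hc1 hc hz

theorem exists_tangentLine_eq (hf : IsDensity f) (hθ : θ ∈ Icc (0 : ℝ) 1) (hb : b ∈ Icc (0 : ℝ) 1)
    (hk : k ∈ Icc (tangentLine f b θ) (Gam f ∅ θ)) : ∃ s ∈ uIcc b θ, tangentLine f s θ = k := by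
  have hcont := (continuousOn_tangentLine hf θ).mono (uIcc_subset_Icc hb hθ)
  refine intermediate_value_uIcc hcont (Icc_subset_uIcc ?_)
  rwa [tangentLine_self]

theorem Gam_Ico_eq_tangentLine (hf : IsDensity f) (hθ : 0 < θ) (hb : b ∈ Icc θ 1)
    (hmin : ∀ s ∈ Icc θ 1, Gam f (Ico 0 s) θ = Gam f (Ico 0 b) θ → b ≤ s) :
    Gam f (Ico 0 b) θ = tangentLine f b θ := by
  have hθ01 : θ ∈ Icc (0 : ℝ) 1 := ⟨hθ.le, hb.1.trans hb.2⟩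
  have hb01 : b ∈ Icc (0 : ℝ) 1 := ⟨hθ.le.trans hb.1, hb.2⟩
  have hGam {s : ℝ} (hs : s ∈ Icc θ 1) :
      Gam f (Ico 0 s) θ = max (tangentLine f 0 θ) (tangentLine f s θ) :=
    Gam_Ico hf (hθ.trans_le hs.1) hs.2 ⟨hθ.le, hs.1⟩
  have hzero := (le_max_left _ _).trans_eq (hGam hb).symm
  have hbound : Gam f (Ico 0 b) θ ∈ Icc (tangentLine f b θ) (Gam f ∅ θ) := by
    rw [hGam hb]
    exact ⟨le_max_right _ _, max_le (tangentLine_le_Gam_empty hf unitInterval.zero_mem hθ01)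
      (tangentLine_le_Gam_empty hf hb01 hθ01)⟩
  obtain ⟨s, hs, hsθ⟩ := exists_tangentLine_eq hf hθ01 hb01 hbound
  rw [uIcc_of_ge hb.1] at hs
  have hs1 : s ∈ Icc θ 1 := ⟨hs.1, hs.2.trans hb.2⟩
  obtain rfl : b = s := (hmin s hs1 (by rw [hGam hs1, hsθ, max_eq_right hzero])).antisymm hs.2
  exact hsθ.symm

theorem Gam_Ioc_eq_tangentLine (hf : IsDensity f) (hθ : θ < 1) (hc : c ∈ Icc 0 θ)
    (hmax : ∀ s ∈ Icc 0 θ, Gam f (Ioc s 1) θ = Gam f (Ioc c 1) θ → s ≤ c) :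
    Gam f (Ioc c 1) θ = tangentLine f c θ := by
  have hθ01 : θ ∈ Icc (0 : ℝ) 1 := ⟨hc.1.trans hc.2, hθ.le⟩
  have hc01 : c ∈ Icc (0 : ℝ) 1 := ⟨hc.1, hc.2.trans hθ.le⟩
  have hGam {s : ℝ} (hs : s ∈ Icc 0 θ) :
      Gam f (Ioc s 1) θ = max (tangentLine f s θ) (tangentLine f 1 θ) :=
    Gam_Ioc hf hs.1 (hs.2.trans_lt hθ) ⟨hs.2, hθ.le⟩
  have hone := (le_max_right _ _).trans_eq (hGam hc).symm
  have hbound : Gam f (Ioc c 1) θ ∈ Icc (tangentLine f c θ) (Gam f ∅ θ) := by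
    rw [hGam hc]
    exact ⟨le_max_left _ _, max_le (tangentLine_le_Gam_empty hf hc01 hθ01)
      (tangentLine_le_Gam_empty hf unitInterval.one_mem hθ01)⟩
  obtain ⟨s, hs, hsθ⟩ := exists_tangentLine_eq hf hθ01 hc01 hbound
  rw [uIcc_of_le hc.2] at hs
  have hs1 : s ∈ Icc 0 θ := ⟨hc.1.trans hs.1, hs.2⟩
  obtain rfl : c = s := hs.1.antisymm (hmax s hs1 (by rw [hGam hs1, hsθ, max_eq_left hone]))
  exact hsθ.symm

theorem Gam_Ico_union_Ioc_eq_left (hf : IsDensity f) (hb : 0 < b) (hb1 : b ≤ 1) (hbc : b ≤ c)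
    (hz : z ∈ Icc 0 b) : Gam f (Ico 0 b ∪ Ioc c 1) z = Gam f (Ico 0 b) z := by
  rw [Gam_Ico_union_Ioc_of_le_left hf hb hb1 hbc hz, Gam_Ico hf hb hb1 hz]

theorem Gam_Ico_union_Ioc_eq_right (hf : IsDensity f) (hc : 0 ≤ c) (hc1 : c < 1) (hbc : b ≤ c)
    (hz : z ∈ Icc c 1) : Gam f (Ico 0 b ∪ Ioc c 1) z = Gam f (Ioc c 1) z := by
  rw [Gam_Ico_union_Ioc_of_right_le hf hc hc1 hbc hz, Gam_Ioc hf hc hc1 hz]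

theorem Gam_Ico_union_Ioc_le_left (hf : IsDensity f) (hP : IsPoolingSet P) (hb : 0 < b)
    (hb1 : b ≤ 1) (hbc : b ≤ c) (hxb : x ≤ b) (hx : Gam f P x = tangentLine f b x)
    (hz : z ∈ Icc 0 x) : Gam f (Ico 0 b ∪ Ioc c 1) z ≤ Gam f P z := by
  have hzb : z ∈ Icc 0 b := ⟨hz.1, hz.2.trans hxb⟩
  have hz01 : z ∈ Icc (0 : ℝ) 1 := ⟨hz.1, hzb.2.trans hb1⟩
  rw [Gam_Ico_union_Ioc_of_le_left hf hb hb1 hbc hzb]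
  exact max_le (tangentLine_zero_le_Gam hf hP hz01)
    (tangentLine_le_Gam_of_mem_uIcc hf hP ⟨hb.le, hb1⟩ hz01 (mem_uIcc.2 (.inl ⟨hz.2, hxb⟩)) hx)

theorem Gam_Ico_union_Ioc_le_right (hf : IsDensity f) (hP : IsPoolingSet P) (hc : 0 ≤ c)
    (hc1 : c < 1) (hbc : b ≤ c) (hcy : c ≤ y) (hy : Gam f P y = tangentLine f c y)
    (hz : z ∈ Icc y 1) : Gam f (Ico 0 b ∪ Ioc c 1) z ≤ Gam f P z := by
  have hzc : z ∈ Icc c 1 := ⟨hcy.trans hz.1, hz.2⟩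
  have hz01 : z ∈ Icc (0 : ℝ) 1 := ⟨hc.trans hzc.1, hz.2⟩
  rw [Gam_Ico_union_Ioc_of_right_le hf hc hc1 hbc hzc]
  exact max_le
    (tangentLine_le_Gam_of_mem_uIcc hf hP ⟨hc, hc1.le⟩ hz01 (mem_uIcc.2 (.inr ⟨hcy, hz.1⟩)) hy)
    (tangentLine_one_le_Gam hf hP hz01)

theorem Gam_le_Gam_Ico_union_Ioc (hf : IsDensity f) (hP : IsPoolingSet P) (hb : 0 < b)
    (hbc : b ≤ c) (hc1 : c < 1) (hx0 : 0 ≤ x) (hx : Gam f P x ≤ tangentLine f b x)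
    (hy1 : y ≤ 1) (hy : Gam f P y ≤ tangentLine f c y) (hz : z ∈ Icc x y) :
    Gam f P z ≤ Gam f (Ico 0 b ∪ Ioc c 1) z := by
  have hz01 : z ∈ Icc (0 : ℝ) 1 := ⟨hx0.trans hz.1, hz.2.trans hy1⟩
  have hc : 0 < c := hb.trans_le hbc
  have hb1 : b < 1 := hbc.trans_lt hc1
  rcases le_total z b with hzb | hbz
  · rw [Gam_Ico_union_Ioc_of_le_left hf hb hb1.le hbc ⟨hz01.1, hzb⟩]
    exact le_max_of_le_right (Gam_le_tangentLine hf hP ⟨hb.le, hb1.le⟩ ⟨hx0, hz.1.trans hz01.2⟩ hx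
      (mem_uIcc.2 (.inl ⟨hz.1, hzb⟩)))
  rcases le_total c z with hcz | hzc
  · rw [Gam_Ico_union_Ioc_of_right_le hf hc.le hc1 hbc ⟨hcz, hz01.2⟩]
    exact le_max_of_le_left (Gam_le_tangentLine hf hP ⟨hc.le, hc1.le⟩ ⟨hz01.1.trans hz.2, hy1⟩ hy
      (mem_uIcc.2 (.inr ⟨hcz, hz.2⟩)))
  · rw [Gam_Ico_union_Ioc_of_mem_Icc hf hb.le hc1.le ⟨hbz, hzc⟩]
    exact Gam_le_Gam_empty hf hP hz01

end PooledTails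

/-- constrained problem. Given `y^L, y^H` achievable by some
pooling set, let `θ_*^L` be the smallest `θ ∈ [θ^L,1]` with
`Γ_{[0,θ)}(θ^L) = y^L` and `θ_*^H` the largest `θ ∈ [0,θ^H]` with
`Γ_{(θ,1]}(θ^H) = y^H`. If `θ_*^L ≤ θ_*^H`, then `P_* = [0,θ_*^L) ∪ (θ_*^H,1]`
satisfies both constraints and uniquely maximizes `∫_0^1 u''(θ)Γ_P(θ)dθ` among
pooling sets satisfying the constraints: every such `P` with `Γ_P ≠ Γ_{P_*}`
yields a strictly smaller value. -/
theorem constrained_unique_optimum (f : ℝ → ℝ) (hf : IsDensity f)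
    (u u' u'' : ℝ → ℝ) (hu : C1AC u u' u'')
    (θL θH : ℝ) (hθL : θL ∈ Ioo (0:ℝ) 1) (hθH : θH ∈ Ioo (0:ℝ) 1) (hLH : θL < θH)
    (hneg1 : ∀ θ ∈ Ico (0:ℝ) θL, u'' θ < 0)
    (hpos : ∀ θ ∈ Ioo θL θH, 0 < u'' θ)
    (hneg2 : ∀ θ ∈ Ioc θH (1:ℝ), u'' θ < 0)
    (yL yH : ℝ)
    (hex : ∃ P : Set ℝ, IsPoolingSet P ∧ Gam f P θL = yL ∧ Gam f P θH = yH)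
    (θsL : ℝ) (hθsL1 : θsL ∈ Icc θL 1) (hθsL2 : Gam f (Ico (0:ℝ) θsL) θL = yL)
    (hθsL3 : ∀ θ ∈ Icc θL (1:ℝ), Gam f (Ico (0:ℝ) θ) θL = yL → θsL ≤ θ)
    (θsH : ℝ) (hθsH1 : θsH ∈ Icc (0:ℝ) θH) (hθsH2 : Gam f (Ioc θsH 1) θH = yH)
    (hθsH3 : ∀ θ ∈ Icc (0:ℝ) θH, Gam f (Ioc θ 1) θH = yH → θ ≤ θsH)
    (hle : θsL ≤ θsH) :
    IsPoolingSet (Ico (0:ℝ) θsL ∪ Ioc θsH 1) ∧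
    Gam f (Ico (0:ℝ) θsL ∪ Ioc θsH 1) θL = yL ∧
    Gam f (Ico (0:ℝ) θsL ∪ Ioc θsH 1) θH = yH ∧
    ∀ P : Set ℝ, IsPoolingSet P → Gam f P θL = yL → Gam f P θH = yH →
      Gam f P ≠ Gam f (Ico (0:ℝ) θsL ∪ Ioc θsH 1) →
      (∫ θ in (0:ℝ)..1, u'' θ * Gam f P θ) <
        ∫ θ in (0:ℝ)..1, u'' θ * Gam f (Ico (0:ℝ) θsL ∪ Ioc θsH 1) θ := by
  have hL0 : 0 < θsL := hθL.1.trans_le hθsL1.1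
  have hH1 : θsH < 1 := hθsH1.2.trans_lt hθH.2
  have hL1 : θsL ≤ 1 := hθsL1.2
  have hH0 : 0 ≤ θsH := hθsH1.1
  have hset := isPoolingSet_Ico_union_Ioc hL1 hH0
  have hL := Gam_Ico_eq_tangentLine hf hθL.1 hθsL1 fun s hs h ↦ hθsL3 s hs (h.trans hθsL2)
  have hH := Gam_Ioc_eq_tangentLine hf hθH.2 hθsH1 fun s hs h ↦ hθsH3 s hs (h.trans hθsH2)
  refine ⟨hset, ?_, ?_, fun P hP hPL hPH hne ↦ ?_⟩
  · rw [Gam_Ico_union_Ioc_eq_left hf hL0 hL1 hle ⟨hθL.1.le, hθsL1.1⟩, hθsL2]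
  · rw [Gam_Ico_union_Ioc_eq_right hf hH0 hH1 hle ⟨hθsH1.2, hθH.2.le⟩, hθsH2]
  rw [hθsL2, ← hPL] at hL
  rw [hθsH2, ← hPH] at hH
  exact integral_mul_lt_integral_mul_of_sign_changes zero_lt_one
    ((intervalIntegrable_iff_integrableOn_Icc_of_le zero_le_one).2 hu.2.2.1)
    (continuousOn_Gam hf hP.subset_Icc) (continuousOn_Gam hf hset.subset_Icc) hneg1 hpos hneg2
    (fun _ ↦ Gam_Ico_union_Ioc_le_left hf hP hL0 hL1 hle hθsL1.1 hL)
    (fun _ ↦ Gam_le_Gam_Ico_union_Ioc hf hP hL0 hle hH1 hθL.1.le hL.le hθH.2.le hH.le)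
    (fun _ ↦ Gam_Ico_union_Ioc_le_right hf hP hH0 hH1 hle hθsH1.2 hH)
    (hne ∘ Gam_eq_of_eqOn hf hP.subset_Icc hset.subset_Icc)
end
end

section
/- Let u_S : ℝ × [0,1] → ℝ be twice continuously differentiable with ∂²u_S/∂d∂θ (d,θ) > 0 for all d ∈ ℝ and θ ∈ [0,1]. Let q : [0,1] → ℝ and p : [0,1] → ℝ be arbitrary functions and define U(θ) = u_S(q(θ),θ) − p(θ). Then the incentive-compatibility condition — U(θ) ≥ u_S(q(θ̂),θ) − p(θ̂) for all θ, θ̂ ∈ [0,1] — holds if and only if q is nondecreasing on [0,1] and U satisfies the envelope formula U(θ) = U(0) + ∫_0^θ (∂u_S/∂θ)(q(t),t) dt for all θ ∈ [0,1]. -/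
open Set

noncomputable section

/-!
Write `F θ' θ` for the payoff of type `θ` reporting `θ'`. Adding the two incentive constraints
between a pair of types shows that the allocation is monotone, hence that `∂₂F` is bounded.
Incentive compatibility says that `V θ = F θ θ` is the upper envelope of the functions `F θ'`, each
of which touches it at `θ'`. So `V` inherits a common Lipschitz constant of the `F θ'`, and
wherever it is differentiable its derivative at `θ` is `∂₂F θ θ`; integrating gives the envelope
formula.

Conversely, if the allocation is monotone then `∂₂F θ' θ` increases in `θ'`, so that `F θ'` grows
more slowly than `V` to the right of `θ'` and faster to the left of it.
-/

open MeasureTheory Function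
open scoped NNReal Topology

/-- Incentive compatibility of a direct mechanism on the set `S` of types: `F θ' θ` is the payoff of
type `θ` when reporting `θ'`, and truthful reporting is optimal. -/
def IsIncentiveCompatibleOn {Θ : Type*} (F : Θ → Θ → ℝ) (S : Set Θ) : Prop :=
  ∀ θ ∈ S, ∀ θ' ∈ S, F θ' θ ≤ F θ θ

/-- Strictly increasing differences (the strict single-crossing condition): a higher action is worth
more, relative to a lower one, to a higher type. -/
def HasStrictIncreasingDifferencesOn {α Θ : Type*} [Preorder α] [Preorder Θ]
    (u : α → Θ → ℝ) (S : Set Θ) : Prop :=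
  ∀ ⦃d d' : α⦄, d < d' → StrictMonoOn (fun θ => u d' θ - u d θ) S

section Monotonicity

theorem hasStrictIncreasingDifferencesOn_of_strictMono {α : Type*} [Preorder α]
    {u u' : α → ℝ → ℝ} {S : Set ℝ} (hS : Convex ℝ S)
    (hu : ∀ d, ∀ θ ∈ S, HasDerivWithinAt (u d) (u' d θ) S θ)
    (hmono : ∀ θ ∈ interior S, StrictMono fun d => u' d θ) :
    HasStrictIncreasingDifferencesOn u S := by
  intro d d' hd
  have hdiff (θ) (hθ : θ ∈ S) : HasDerivWithinAt (fun θ => u d' θ - u d θ)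
      (u' d' θ - u' d θ) S θ := (hu d' θ hθ).sub (hu d θ hθ)
  exact strictMonoOn_of_hasDerivWithinAt_pos hS (fun θ hθ => (hdiff θ hθ).continuousWithinAt)
    (fun θ hθ => (hdiff θ (interior_subset hθ)).mono interior_subset)
    (fun θ hθ => sub_pos.2 (hmono θ hθ hd))

theorem IsIncentiveCompatibleOn.monotoneOn {α Θ : Type*} [LinearOrder α] [PartialOrder Θ]
    {u : α → Θ → ℝ} {q : Θ → α} {p : Θ → ℝ} {S : Set Θ}
    (hIC : IsIncentiveCompatibleOn (fun θ' θ => u (q θ') θ - p θ') S)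
    (hu : HasStrictIncreasingDifferencesOn u S) : MonotoneOn q S := by
  intro θ hθ θ' hθ' hle
  by_contra! hlt
  have hθθ' : θ < θ' := hle.lt_of_ne (by rintro rfl; exact hlt.false)
  have hdiff : u (q θ) θ - u (q θ') θ < u (q θ) θ' - u (q θ') θ' := hu hlt hθ hθ' hθθ'
  have hθ_truthful : u (q θ') θ - p θ' ≤ u (q θ) θ - p θ := hIC θ hθ θ' hθ'
  have hθ'_truthful : u (q θ) θ' - p θ ≤ u (q θ') θ' - p θ' := hIC θ' hθ' θ hθ
  linarith

end Monotonicity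

section Envelope

theorem IsIncentiveCompatibleOn.lipschitzOnWith_diag {Θ : Type*} [PseudoMetricSpace Θ]
    {F : Θ → Θ → ℝ} {S : Set Θ} {K : ℝ≥0} (hIC : IsIncentiveCompatibleOn F S)
    (hF : ∀ θ' ∈ S, LipschitzOnWith K (F θ') S) : LipschitzOnWith K (fun θ => F θ θ) S :=
  LipschitzOnWith.of_le_add_mul K fun x hx y hy => calc
    F x x ≤ F x y + K * dist x y := (hF x hx).le_add_mul hx hy
    _ ≤ F y y + K * dist x y := by gcongr; exact hIC y hy x hx

theorem deriv_eq_of_eventually_le {f V : ℝ → ℝ} {m t : ℝ} (hle : ∀ᶠ s in 𝓝 t, f s ≤ V s)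
    (htouch : f t = V t) (hf : HasDerivAt f m t) (hV : DifferentiableAt ℝ V t) :
    deriv V t = m := by
  have hmin : IsLocalMin (fun s => V s - f s) t :=
    hle.mono fun s hs => by simpa only [htouch, sub_self, sub_nonneg] using hs
  exact sub_eq_zero.1 (hmin.hasDerivAt_eq_zero (hV.hasDerivAt.sub hf))

variable {F F' : ℝ → ℝ → ℝ} {a b : ℝ}

theorem IsIncentiveCompatibleOn.integral_diag_eq_sub {K : ℝ} (hab : a ≤ b)
    (hIC : IsIncentiveCompatibleOn F (Icc a b))
    (hF : ∀ s ∈ Icc a b, ∀ t ∈ Icc a b, HasDerivWithinAt (F s) (F' s t) (Icc a b) t)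
    (hK : ∀ s ∈ Icc a b, ∀ t ∈ Icc a b, |F' s t| ≤ K) :
    ∫ t in a..b, F' t t = F b b - F a a := by
  have hLip : LipschitzOnWith K.toNNReal (fun t => F t t) (uIcc a b) := by
    rw [uIcc_of_le hab]
    refine hIC.lipschitzOnWith_diag fun s hs =>
      (convex_Icc a b).lipschitzOnWith_of_nnnorm_hasDerivWithin_le (hF s hs) fun t ht => ?_
    exact NNReal.le_toNNReal_of_coe_le (hK s hs t ht)
  have hAC := hLip.absolutelyContinuousOnInterval
  rw [← hAC.integral_deriv_eq_sub]
  refine intervalIntegral.integral_congr_ae ?_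
  filter_upwards [hAC.ae_differentiableAt, volume.ae_ne b] with t hdiff htb ht
  rw [uIoc_of_le hab] at ht
  have htS : t ∈ Icc a b := Ioc_subset_Icc_self ht
  have hnhds : Icc a b ∈ 𝓝 t := Icc_mem_nhds ht.1 (ht.2.lt_of_ne htb)
  have hbelow : ∀ᶠ s in 𝓝 t, F t s ≤ F s s := by
    filter_upwards [hnhds] with s hs using hIC s hs t htS
  exact (deriv_eq_of_eventually_le hbelow rfl ((hF t htS t htS).hasDerivAt hnhds)
    (hdiff (uIcc_of_le hab ▸ htS))).symm

theorem IsIncentiveCompatibleOn.envelope_formula {K : ℝ}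
    (hIC : IsIncentiveCompatibleOn F (Icc a b))
    (hF : ∀ s ∈ Icc a b, ∀ t ∈ Icc a b, HasDerivWithinAt (F s) (F' s t) (Icc a b) t)
    (hK : ∀ s ∈ Icc a b, ∀ t ∈ Icc a b, |F' s t| ≤ K) {θ : ℝ} (hθ : θ ∈ Icc a b) :
    F θ θ = F a a + ∫ t in a..θ, F' t t := by
  have hsub : Icc a θ ⊆ Icc a b := Icc_subset_Icc_right hθ.2
  have hICθ : IsIncentiveCompatibleOn F (Icc a θ) :=
    fun t ht s hs => hIC t (hsub ht) s (hsub hs)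
  rw [hICθ.integral_diag_eq_sub hθ.1
    (fun s hs t ht => (hF s (hsub hs) t (hsub ht)).mono hsub)
    (fun s hs t ht => hK s (hsub hs) t (hsub ht)), add_sub_cancel]

end Envelope

section Sufficiency

theorem integral_eq_sub_of_eq_add_integral {V φ : ℝ → ℝ} {a b : ℝ} (hint : IntegrableOn φ (Icc a b))
    (hV : ∀ θ ∈ Icc a b, V θ = V a + ∫ t in a..θ, φ t)
    {x y : ℝ} (hx : x ∈ Icc a b) (hy : y ∈ Icc a b) : ∫ t in x..y, φ t = V y - V x := by
  have hintegrable (z) (hz : z ∈ Icc a b) : IntervalIntegrable φ volume a z :=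
    (intervalIntegrable_iff_integrableOn_Icc_of_le hz.1).2
      (hint.mono_set (Icc_subset_Icc_right hz.2))
  rw [hV x hx, hV y hy, add_sub_add_left_eq_sub,
    intervalIntegral.integral_interval_sub_left (hintegrable y hy) (hintegrable x hx)]

theorem isIncentiveCompatibleOn_of_envelope_formula {F F' : ℝ → ℝ → ℝ} {a b : ℝ}
    (hF : ∀ s ∈ Icc a b, ∀ t ∈ Icc a b, HasDerivWithinAt (F s) (F' s t) (Icc a b) t)
    (hmono : ∀ t ∈ Icc a b, MonotoneOn (fun s => F' s t) (Icc a b))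
    (hint : IntegrableOn (fun t => F' t t) (Icc a b))
    (henv : ∀ θ ∈ Icc a b, F θ θ = F a a + ∫ t in a..θ, F' t t) :
    IsIncentiveCompatibleOn F (Icc a b) := by
  have hcont (s) (hs : s ∈ Icc a b) : ContinuousOn (F s) (Icc a b) :=
    fun t ht => (hF s hs t ht).continuousWithinAt
  have hright (s) (hs : s ∈ Icc a b) (t) (ht : t ∈ Ioo a b) :
      HasDerivWithinAt (F s) (F' s t) (Ioi t) t :=
    ((hF s hs t (Ioo_subset_Icc_self ht)).hasDerivAt (Icc_mem_nhds ht.1 ht.2)).hasDerivWithinAt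
  have hV {x y} (hx : x ∈ Icc a b) (hy : y ∈ Icc a b) : ∫ t in x..y, F' t t = F y y - F x x :=
    integral_eq_sub_of_eq_add_integral (V := fun θ => F θ θ) hint henv hx hy
  intro θ hθ θ' hθ'
  rcases le_total θ' θ with hle | hle
  · have hIcc : Icc θ' θ ⊆ Icc a b := Icc_subset_Icc hθ'.1 hθ.2
    have hIoo : Ioo θ' θ ⊆ Ioo a b := Ioo_subset_Ioo hθ'.1 hθ.2
    have hslower : F θ' θ - F θ' θ' ≤ ∫ t in θ'..θ, F' t t :=
      intervalIntegral.sub_le_integral_of_hasDeriv_right_of_le hle ((hcont θ' hθ').mono hIcc)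
        (fun t ht => hright θ' hθ' t (hIoo ht)) (hint.mono_set hIcc) fun t ht =>
        have htS : t ∈ Icc a b := hIcc (Ioo_subset_Icc_self ht)
        hmono t htS hθ' htS ht.1.le
    linarith [hV hθ' hθ]
  · have hIcc : Icc θ θ' ⊆ Icc a b := Icc_subset_Icc hθ.1 hθ'.2
    have hIoo : Ioo θ θ' ⊆ Ioo a b := Ioo_subset_Ioo hθ.1 hθ'.2
    have hfaster : ∫ t in θ..θ', F' t t ≤ F θ' θ' - F θ' θ :=
      intervalIntegral.integral_le_sub_of_hasDeriv_right_of_le hle ((hcont θ' hθ').mono hIcc)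
        (fun t ht => hright θ' hθ' t (hIoo ht)) (hint.mono_set hIcc) fun t ht =>
        have htS : t ∈ Icc a b := hIcc (Ioo_subset_Icc_self ht)
        hmono t htS htS hθ' ht.2.le
    linarith [hV hθ hθ']

end Sufficiency

section MonotoneAllocation

theorem exists_abs_le_of_monotoneOn {ι α X : Type*} [Preorder ι] [Preorder α] [TopologicalSpace X]
    {g : α → X → ℝ} {q : ι → α} {S : Set X} {a b : ι} (hS : IsCompact S)
    (hg : ∀ d, ContinuousOn (g d) S) (hmono : ∀ t ∈ S, Monotone fun d => g d t)
    (hq : MonotoneOn q (Icc a b)) : ∃ K, ∀ s ∈ Icc a b, ∀ t ∈ S, |g (q s) t| ≤ K := by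
  obtain ⟨Ka, hKa⟩ := hS.exists_bound_of_continuousOn (hg (q a))
  obtain ⟨Kb, hKb⟩ := hS.exists_bound_of_continuousOn (hg (q b))
  refine ⟨max Ka Kb, fun s hs t ht => (abs_le_max_abs_abs ?_ ?_).trans
    (max_le_max (hKa t ht) (hKb t ht))⟩
  · exact hmono t ht (hq (left_mem_Icc.2 (hs.1.trans hs.2)) hs hs.1)
  · exact hmono t ht (hq hs (right_mem_Icc.2 (hs.1.trans hs.2)) hs.2)

variable {α : Type*} [LinearOrder α] [TopologicalSpace α] [OrderTopology α]
  [SecondCountableTopology α]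

theorem aemeasurable_restrict_apply_of_monotoneOn {Θ : Type*} [LinearOrder Θ] [TopologicalSpace Θ]
    [OrderClosedTopology Θ] [MeasurableSpace Θ] [BorelSpace Θ] {g : α → Θ → ℝ} {q : Θ → α}
    {S : Set Θ} {μ : Measure Θ} (hS : MeasurableSet S)
    (hg : ContinuousOn (uncurry g) (univ ×ˢ S)) (hq : MonotoneOn q S) :
    AEMeasurable (fun t => g (q t) t) (μ.restrict S) := by
  borelize α
  have hcont : Continuous fun x : α × S => g x.1 x.2 :=
    hg.comp_continuous (f := fun x : α × S => (x.1, (x.2 : Θ))) (by fun_prop)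
      fun x => ⟨mem_univ _, x.2.2⟩
  have hqS : Monotone fun t : S => q t := fun s t hst => hq s.2 t.2 hst
  exact aemeasurable_restrict_of_measurable_subtype hS <|
    hcont.measurable.comp (hqS.measurable.prodMk measurable_id)

theorem integrableOn_apply_of_monotoneOn {g : α → ℝ → ℝ} {q : ℝ → α} {a b : ℝ}
    {μ : Measure ℝ} [IsLocallyFiniteMeasure μ]
    (hg : ContinuousOn (uncurry g) (univ ×ˢ Icc a b))
    (hmono : ∀ t ∈ Icc a b, Monotone fun d => g d t) (hq : MonotoneOn q (Icc a b)) :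
    IntegrableOn (fun t => g (q t) t) (Icc a b) μ := by
  obtain ⟨K, hK⟩ := exists_abs_le_of_monotoneOn isCompact_Icc
    (fun d => hg.uncurry_left d (mem_univ d)) hmono hq
  exact IntegrableOn.of_bound measure_Icc_lt_top
    (aemeasurable_restrict_apply_of_monotoneOn measurableSet_Icc hg hq).aestronglyMeasurable K
    (ae_restrict_of_forall_mem measurableSet_Icc fun t ht => hK t ht t ht)

end MonotoneAllocation

theorem continuous_deriv_of_contDiff_uncurry {𝕜 E F : Type*} [NontriviallyNormedField 𝕜]
    [NormedAddCommGroup E] [NormedSpace 𝕜 E] [NormedAddCommGroup F] [NormedSpace 𝕜 F]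
    {f : E → 𝕜 → F} (hf : ContDiff 𝕜 1 (uncurry f)) :
    Continuous fun x : E × 𝕜 => deriv (f x.1) x.2 := by
  have hf₁ : ContDiff 𝕜 1 (uncurry fun (x : E × 𝕜) (t : 𝕜) => f x.1 t) :=
    hf.comp (f := fun y : (E × 𝕜) × 𝕜 => (y.1.1, y.2)) (by fun_prop)
  have hfderiv : Continuous fun x : E × 𝕜 => fderiv 𝕜 (f x.1) x.2 :=
    (hf₁.fderiv contDiff_snd (n := 0) (by norm_num)).continuous
  exact hfderiv.clm_apply continuous_const

theorem ic_iff_monotone_and_envelope_general {α : Type*} [LinearOrder α] [TopologicalSpace α]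
    [OrderTopology α] [SecondCountableTopology α] {u u' : α → ℝ → ℝ} {a b : ℝ}
    (hu : ∀ d, ∀ θ ∈ Icc a b, HasDerivWithinAt (u d) (u' d θ) (Icc a b) θ)
    (hu' : ContinuousOn (uncurry u') (univ ×ˢ Icc a b))
    (hmono : ∀ θ ∈ Icc a b, StrictMono fun d => u' d θ) (q : ℝ → α) (p : ℝ → ℝ) :
    IsIncentiveCompatibleOn (fun θ' θ => u (q θ') θ - p θ') (Icc a b) ↔
      MonotoneOn q (Icc a b) ∧ ∀ θ ∈ Icc a b,
        u (q θ) θ - p θ = (u (q a) a - p a) + ∫ t in a..θ, u' (q t) t := by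
  have hpayoff : ∀ s ∈ Icc a b, ∀ t ∈ Icc a b,
      HasDerivWithinAt (fun t => u (q s) t - p s) (u' (q s) t) (Icc a b) t :=
    fun s _ t ht => (hu (q s) t ht).sub_const (p s)
  have hmono' : ∀ t ∈ Icc a b, Monotone fun d => u' d t := fun t ht => (hmono t ht).monotone
  constructor
  · intro hIC
    have hq : MonotoneOn q (Icc a b) := hIC.monotoneOn <|
      hasStrictIncreasingDifferencesOn_of_strictMono (convex_Icc a b) hu
        fun θ hθ => hmono θ (interior_subset hθ)
    obtain ⟨K, hK⟩ := exists_abs_le_of_monotoneOn isCompact_Icc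
      (fun d => hu'.uncurry_left d (mem_univ d)) hmono' hq
    exact ⟨hq, fun θ hθ => hIC.envelope_formula hpayoff hK hθ⟩
  · rintro ⟨hq, henv⟩
    exact isIncentiveCompatibleOn_of_envelope_formula hpayoff
      (fun t ht => (hmono' t ht).comp_monotoneOn hq)
      (integrableOn_apply_of_monotoneOn hu' hmono' hq) henv

/-- for a twice continuously differentiable `u_S` with strictly
positive cross partial `∂²u_S/∂d∂θ` on `ℝ × [0,1]`, an allocation `q` with
payments `p` is incentive compatible iff `q` is nondecreasing on `[0,1]` and
the envelope (revenue-equivalence) formula holds. -/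
theorem ic_iff_monotone_and_envelope (uS : ℝ → ℝ → ℝ)
    (hC2 : ContDiff ℝ 2 (fun p : ℝ × ℝ => uS p.1 p.2))
    (hcross : ∀ d : ℝ, ∀ θ ∈ Icc (0:ℝ) 1,
      0 < deriv (fun d' => deriv (fun t => uS d' t) θ) d)
    (q p : ℝ → ℝ) :
    (∀ θ ∈ Icc (0:ℝ) 1, ∀ θ' ∈ Icc (0:ℝ) 1,
        uS (q θ') θ - p θ' ≤ uS (q θ) θ - p θ)
      ↔ (MonotoneOn q (Icc (0:ℝ) 1) ∧
        ∀ θ ∈ Icc (0:ℝ) 1,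
          uS (q θ) θ - p θ = (uS (q 0) 0 - p 0) +
            ∫ t in (0:ℝ)..θ, deriv (fun s => uS (q t) s) t) :=
  ic_iff_monotone_and_envelope_general (u' := fun d θ => deriv (uS d) θ)
    (fun d _ _ => (hC2.comp (contDiff_prodMk_right d)).differentiable two_ne_zero _
      |>.hasDerivAt.hasDerivWithinAt)
    (continuous_deriv_of_contDiff_uncurry (hC2.of_le one_le_two)).continuousOn
    (fun θ hθ => strictMono_of_deriv_pos fun d => hcross d θ hθ) q p
end
end

section
/- Let u_R : ℝ × [0,1] → ℝ be twice continuously differentiable with ∂²u_R/∂d²(d,m) ≤ −κ for some κ > 0 and ∂²u_R/∂d∂m(d,m) > 0 for all d ∈ ℝ, m ∈ [0,1], and suppose for each m ∈ [0,1] there exists ρ_R(m) ∈ ℝ with ∂u_R/∂d(ρ_R(m),m) = 0. Fix L ≥ 0 and define w_R(d,m) = u_R(ρ_R(m),m) − u_R(d,m) and D(m) = {d ∈ ℝ : w_R(d,m) ≤ L}. Then for each m, D(m) is a nonempty compact interval [ρ_-(m), ρ_+(m)] whose endpoints satisfy w_R(ρ_±(m),m) = L when ρ_-(m) < ρ_+(m),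 and both ρ_- and ρ_+ are nondecreasing functions of m on [0,1]. -/
open Set

noncomputable section

/-!
The ideal point `ρ_R(m)` maximizes the strictly concave payoff `u_R(·, m)`, and a strictly concave
function falls at least linearly away from its maximizer. So `D(m)`, a superlevel set, is compact
and convex, and the loss equals `L` on its frontier.

For monotonicity, let `m₁ ≤ m₂`. A positive cross derivative makes `u_R(·, m₂) - u_R(·, m₁)`
nondecreasing, so if `a ∈ D(m₁)` lies above `ρ_R(m₂)`, then moving from `a` down to `ρ_R(m₂)` gains
no more under `m₂` than under `m₁`, hence at most `L`, and `a ∈ D(m₂)`. In all cases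
`a ⊔ ρ_R(m₂) ∈ D(m₂)`, so `D(m₂)` reaches at least as far up as `D(m₁)`. The lower endpoints are
compared dually, through `b ⊓ ρ_R(m₁) ∈ D(m₁)` for `b ∈ D(m₂)`.
-/

open Bornology Metric

theorem isBounded_superlevel_of_le_on_sphere {E : Type*} [NormedAddCommGroup E] [NormedSpace ℝ E]
    {f : E → ℝ} {r : E} {c : ℝ} (hf : ConcaveOn ℝ univ f) (hc : c < f r)
    (hsphere : ∀ y ∈ sphere r 1, f y ≤ c) (a : ℝ) : IsBounded {x | a ≤ f x} := by
  refine isBounded_closedBall.subset fun x (hx : a ≤ f x) =>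
    mem_closedBall_iff_norm.2 (?_ : ‖x - r‖ ≤ max 1 ((f r - a) / (f r - c)))
  rcases le_or_gt ‖x - r‖ 1 with hnear | hfar
  · exact hnear.trans (le_max_left _ _)
  refine le_max_of_le_right ?_
  -- The segment from `r` to `x` crosses the unit sphere around `r` at parameter `t`.
  set t := ‖x - r‖⁻¹ with ht
  have hnorm : 0 < ‖x - r‖ := one_pos.trans hfar
  have hy : (1 - t) • r + t • x ∈ sphere r 1 := by
    have : (1 - t) • r + t • x - r = t • (x - r) := by module
    rw [mem_sphere_iff_norm, this, norm_smul, ht, norm_inv, norm_norm, inv_mul_cancel₀ hnorm.ne']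
  have hconc : (1 - t) * f r + t * f x ≤ f ((1 - t) • r + t • x) :=
    hf.2 (mem_univ r) (mem_univ x) (sub_nonneg.2 (inv_le_one_of_one_le₀ hfar.le))
      (inv_nonneg.2 hnorm.le) (sub_add_cancel 1 t)
  have hdrop : f r - c ≤ t * (f r - f x) := by linarith [hsphere _ hy]
  have hlinear : ‖x - r‖ * (f r - c) ≤ f r - f x := by
    rwa [ht, inv_mul_eq_div, le_div_iff₀' hnorm] at hdrop
  rw [le_div_iff₀ (sub_pos.2 hc)]
  linarith

theorem lt_of_strictConcaveOn_of_isMaxOn {𝕜 E β : Type*} [Field 𝕜] [LinearOrder 𝕜]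
    [IsStrictOrderedRing 𝕜] [AddCommMonoid β] [PartialOrder β] [IsOrderedAddMonoid β]
    [AddCommMonoid E] [SMul 𝕜 E] [Module 𝕜 β] [PosSMulMono 𝕜 β] {f : E → β} {s : Set E} {r x : E}
    (hf : StrictConcaveOn 𝕜 s f) (hmax : IsMaxOn f s r) (hr : r ∈ s) (hx : x ∈ s) (hne : x ≠ r) :
    f x < f r :=
  (hmax hx).lt_of_ne fun heq =>
    hne (hf.eq_of_isMaxOn (fun _ hz => (hmax hz).trans heq.ge) hmax hx hr)

theorem isCompact_superlevel_of_isMaxOn {E : Type*} [NormedAddCommGroup E] [NormedSpace ℝ E]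
    [FiniteDimensional ℝ E] {f : E → ℝ} {r : E} (hf : StrictConcaveOn ℝ univ f)
    (hmax : IsMaxOn f univ r) (a : ℝ) : IsCompact {x | a ≤ f x} := by
  have : ProperSpace E := FiniteDimensional.proper_real E
  have hcont : Continuous f := hf.concaveOn.locallyLipschitz.continuous
  have hlt : ∀ y ∈ sphere r 1, f y < f r := fun y hy =>
    lt_of_strictConcaveOn_of_isMaxOn hf hmax (mem_univ r) (mem_univ y)
      (ne_of_mem_sphere hy one_ne_zero)
  obtain ⟨c, hc, hsphere⟩ : ∃ c < f r, ∀ y ∈ sphere r 1, f y ≤ c :=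
    IsCompact.exists_forall_le' (α := ℝᵒᵈ) (isCompact_sphere r 1) hcont.continuousOn hlt
  exact isCompact_of_isClosed_isBounded (isClosed_le continuous_const hcont)
    (isBounded_superlevel_of_le_on_sphere hf.concaveOn hc hsphere a)

theorem isMaxOn_of_hasDerivAt_zero {f : ℝ → ℝ} {s : Set ℝ} {r : ℝ} (hf : ConcaveOn ℝ s f)
    (hr : r ∈ interior s) (hderiv : HasDerivAt f 0 r) : IsMaxOn f s r := by
  have hright : derivWithin (-f) (Ioi r) r = 0 := by
    simpa using hderiv.neg.hasDerivWithinAt.derivWithin (uniqueDiffWithinAt_Ioi r)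
  simpa using (hf.neg.isMinOn_of_rightDeriv_eq_zero hr hright).neg

theorem eq_of_sublevel_eq_Icc {α β : Type*} [TopologicalSpace α] [LinearOrder α] [OrderTopology α]
    [DenselyOrdered α] [NoMinOrder α] [NoMaxOrder α] [TopologicalSpace β] [LinearOrder β]
    [OrderClosedTopology β] {g : α → β} {c : β} {a b : α} (hg : Continuous g) (hab : a ≤ b)
    (h : {x | g x ≤ c} = Icc a b) : g a = c ∧ g b = c := by
  have hfrontier : {a, b} ⊆ {x | g x = c} := by
    rw [← frontier_Icc hab, ← h]
    exact frontier_le_subset_eq hg continuous_const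
  exact ⟨hfrontier (mem_insert a {b}), hfrontier (mem_insert_of_mem a rfl)⟩

/-- The set `D(m)` of the paper, for the payoff `f = u_R(·, m)` and its ideal point `r = ρ_R(m)`:
the actions whose loss `w_R(d, m)` relative to `r` is at most `L`. -/
def enforceableSet {X G : Type*} [Sub G] [LE G] (f : X → G) (r : X) (L : G) : Set X :=
  {d | f r - f d ≤ L}

/-- Increasing differences of `u` in `(d, m)`, for `m` ranging over `s`: the gain from a larger `d`
is nondecreasing in `m`. This is the order-theoretic form of `∂²u/∂d∂m ≥ 0`. -/
def IncreasingDifferencesOn {X M G : Type*} [Preorder X] [Preorder M] [Preorder G] [Sub G]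
    (u : X → M → G) (s : Set M) : Prop :=
  ∀ ⦃m₁⦄, m₁ ∈ s → ∀ ⦃m₂⦄, m₂ ∈ s → m₁ ≤ m₂ → Monotone fun d => u d m₂ - u d m₁

theorem mem_enforceableSet_self {X G : Type*} [AddGroup G] [Preorder G] {f : X → G} {p : X} {L : G}
    (hL : 0 ≤ L) : p ∈ enforceableSet f p L :=
  (sub_self (f p)).trans_le hL

section Comparison

variable {X G : Type*} [LinearOrder X] [AddCommGroup G] [PartialOrder G] [IsOrderedAddMonoid G]
  {f g : X → G} {r a : X} {L : G}

theorem sup_mem_enforceableSet (hmono : Monotone fun d => g d - f d) (hr : IsMaxOn f univ r)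
    (hL : 0 ≤ L) (ha : a ∈ enforceableSet f r L) (q : X) : a ⊔ q ∈ enforceableSet g q L := by
  rcases le_total a q with haq | hqa
  · rw [sup_eq_right.2 haq]
    exact mem_enforceableSet_self hL
  rw [sup_eq_left.2 hqa]
  calc g q - g a ≤ f q - f a :=
      sub_le_sub_iff.2 ((sub_le_sub_iff.1 (hmono hqa)).trans_eq (add_comm _ _))
    _ ≤ f r - f a := sub_le_sub_right (hr (mem_univ q)) _
    _ ≤ L := ha

theorem inf_mem_enforceableSet (hmono : Monotone fun d => g d - f d) (hr : IsMaxOn g univ r)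
    (hL : 0 ≤ L) (ha : a ∈ enforceableSet g r L) (q : X) : a ⊓ q ∈ enforceableSet f q L := by
  rcases le_total q a with hqa | haq
  · rw [inf_eq_right.2 hqa]
    exact mem_enforceableSet_self hL
  rw [inf_eq_left.2 haq]
  calc f q - f a ≤ g q - g a :=
      sub_le_sub_iff.2 ((add_comm _ _).trans_le (sub_le_sub_iff.1 (hmono haq)))
    _ ≤ g r - g a := sub_le_sub_right (hr (mem_univ q)) _
    _ ≤ L := ha

end Comparison

theorem enforceableSet_eq_superlevel {X G : Type*} [AddCommGroup G] [PartialOrder G]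
    [IsOrderedAddMonoid G] {f : X → G} {r : X} {L : G} :
    enforceableSet f r L = {d | f r - L ≤ f d} :=
  Set.ext fun d => (sub_le_comm : f r - f d ≤ L ↔ f r - L ≤ f d)

theorem isCompact_enforceableSet {E : Type*} [NormedAddCommGroup E] [NormedSpace ℝ E]
    [FiniteDimensional ℝ E] {f : E → ℝ} {r : E} {L : ℝ} (hf : StrictConcaveOn ℝ univ f)
    (hr : IsMaxOn f univ r) : IsCompact (enforceableSet f r L) := by
  rw [enforceableSet_eq_superlevel]
  exact isCompact_superlevel_of_isMaxOn hf hr (f r - L)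

theorem convex_enforceableSet {E : Type*} [AddCommGroup E] [Module ℝ E] {f : E → ℝ} {r : E} {L : ℝ}
    (hf : ConcaveOn ℝ univ f) : Convex ℝ (enforceableSet f r L) := by
  simpa only [enforceableSet_eq_superlevel, mem_univ, true_and] using hf.convex_ge (f r - L)

theorem enforceableSet_eq_Icc {f : ℝ → ℝ} {r L : ℝ} (hf : StrictConcaveOn ℝ univ f)
    (hr : IsMaxOn f univ r) (hL : 0 ≤ L) :
    enforceableSet f r L = Icc (sInf (enforceableSet f r L)) (sSup (enforceableSet f r L)) :=
  eq_Icc_of_connected_compact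
    ⟨⟨r, mem_enforceableSet_self hL⟩, (convex_enforceableSet hf.concaveOn).isPreconnected⟩
    (isCompact_enforceableSet hf hr)

theorem increasingDifferencesOn_of_monotoneOn_deriv {M : Type*} [Preorder M] {u : ℝ → M → ℝ}
    {s : Set M} (hdiff : ∀ m ∈ s, Differentiable ℝ fun d => u d m)
    (hmono : ∀ d, MonotoneOn (fun m => deriv (fun d' => u d' m) d) s) :
    IncreasingDifferencesOn u s := by
  intro m₁ h₁ m₂ h₂ h
  refine monotone_of_deriv_nonneg ((hdiff m₂ h₂).sub (hdiff m₁ h₁)) fun d => ?_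
  have hderiv := ((hdiff m₂ h₂ d).hasDerivAt.sub (hdiff m₁ h₁ d).hasDerivAt).deriv
  exact (sub_nonneg.2 (hmono d h₁ h₂ h)).trans_eq hderiv.symm

theorem strictMonoOn_of_forall_deriv_pos {g : ℝ → ℝ} {s : Set ℝ} (hs : Convex ℝ s)
    (hg : ∀ x ∈ s, 0 < deriv g x) : StrictMonoOn g s :=
  strictMonoOn_of_deriv_pos hs
    (fun x hx =>
      (differentiableAt_of_deriv_ne_zero (hg x hx).ne').continuousAt.continuousWithinAt)
    fun x hx => hg x (interior_subset hx)

theorem enforceable_set_interval_monotone_general {M : Type*} [Preorder M] {s : Set M}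
    {u : ℝ → M → ℝ} {ρ : M → ℝ} {L : ℝ} (hconc : ∀ m ∈ s, StrictConcaveOn ℝ univ fun d => u d m)
    (hincr : IncreasingDifferencesOn u s) (hmax : ∀ m ∈ s, IsMaxOn (fun d => u d m) univ (ρ m))
    (hL : 0 ≤ L) :
    ∃ ρm ρp : M → ℝ,
      (∀ m ∈ s, ρm m ≤ ρp m ∧ {d | u (ρ m) m - u d m ≤ L} = Icc (ρm m) (ρp m) ∧
        u (ρ m) m - u (ρm m) m = L ∧ u (ρ m) m - u (ρp m) m = L) ∧
      MonotoneOn ρm s ∧ MonotoneOn ρp s := by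
  let D : M → Set ℝ := fun m => enforceableSet (fun d => u d m) (ρ m) L
  have hne : ∀ m, (D m).Nonempty := fun m => ⟨ρ m, mem_enforceableSet_self hL⟩
  have hcompact : ∀ m ∈ s, IsCompact (D m) := fun m hm =>
    isCompact_enforceableSet (hconc m hm) (hmax m hm)
  refine ⟨fun m => sInf (D m), fun m => sSup (D m), fun m hm => ?_, fun m₁ h₁ m₂ h₂ h => ?_,
    fun m₁ h₁ m₂ h₂ h => ?_⟩
  · have hIcc : D m = Icc (sInf (D m)) (sSup (D m)) :=
      enforceableSet_eq_Icc (hconc m hm) (hmax m hm) hL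
    have hle : sInf (D m) ≤ sSup (D m) := nonempty_Icc.1 (hIcc ▸ hne m)
    have hcont : Continuous fun d => u (ρ m) m - u d m :=
      continuous_const.sub (hconc m hm).concaveOn.locallyLipschitz.continuous
    exact ⟨hle, hIcc, eq_of_sublevel_eq_Icc (g := fun d => u (ρ m) m - u d m) hcont hle hIcc⟩
  · refine le_csInf (hne m₂) fun b hb => ?_
    have hmem := inf_mem_enforceableSet (hincr h₁ h₂ h) (hmax m₂ h₂) hL hb (ρ m₁)
    exact (csInf_le (hcompact m₁ h₁).bddBelow hmem).trans inf_le_left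
  · refine csSup_le (hne m₁) fun a ha => ?_
    have hmem := sup_mem_enforceableSet (hincr h₁ h₂ h) (hmax m₁ h₁) hL ha (ρ m₂)
    exact le_sup_left.trans (le_csSup (hcompact m₂ h₂).bddAbove hmem)

/-- for each `m ∈ [0,1]`, the set
`D(m) = {d : w_R(d,m) ≤ L}` is a nonempty compact interval `[ρ₋(m), ρ₊(m)]`
whose endpoints satisfy `w_R(ρ±(m),m) = L` when `ρ₋(m) < ρ₊(m)`, and both
`ρ₋` and `ρ₊` are nondecreasing on `[0,1]`. -/
theorem enforceable_set_interval_monotone (uR : ℝ → ℝ → ℝ)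
    (hC2 : ContDiff ℝ 2 (fun p : ℝ × ℝ => uR p.1 p.2))
    (κ : ℝ) (hκ : 0 < κ)
    (hconc : ∀ d : ℝ, ∀ m ∈ Icc (0:ℝ) 1,
      deriv (fun d' => deriv (fun d'' => uR d'' m) d') d ≤ -κ)
    (hcross : ∀ d : ℝ, ∀ m ∈ Icc (0:ℝ) 1,
      0 < deriv (fun m' => deriv (fun d' => uR d' m') d) m)
    (ρR : ℝ → ℝ)
    (hρR : ∀ m ∈ Icc (0:ℝ) 1, deriv (fun d => uR d m) (ρR m) = 0)
    (L : ℝ) (hL : 0 ≤ L) :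
    ∃ ρm ρp : ℝ → ℝ,
      (∀ m ∈ Icc (0:ℝ) 1,
        ρm m ≤ ρp m ∧
        {d : ℝ | uR (ρR m) m - uR d m ≤ L} = Icc (ρm m) (ρp m) ∧
        (ρm m < ρp m →
          uR (ρR m) m - uR (ρm m) m = L ∧ uR (ρR m) m - uR (ρp m) m = L)) ∧
      MonotoneOn ρm (Icc (0:ℝ) 1) ∧ MonotoneOn ρp (Icc (0:ℝ) 1) := by
  have hdiff (m : ℝ) : Differentiable ℝ fun d => uR d m :=
    (hC2.differentiable two_ne_zero).comp (differentiable_id.prodMk (differentiable_const m))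
  have hstrict : ∀ m ∈ Icc (0:ℝ) 1, StrictConcaveOn ℝ univ fun d => uR d m := fun m hm =>
    strictConcaveOn_univ_of_deriv2_neg (hdiff m).continuous fun d =>
      (hconc d m hm).trans_lt (neg_neg_of_pos hκ)
  have hincr : IncreasingDifferencesOn uR (Icc 0 1) :=
    increasingDifferencesOn_of_monotoneOn_deriv (fun m _ => hdiff m) fun d =>
      (strictMonoOn_of_forall_deriv_pos (convex_Icc 0 1) (hcross d)).monotoneOn
  have hmax : ∀ m ∈ Icc (0:ℝ) 1, IsMaxOn (fun d => uR d m) univ (ρR m) := fun m hm =>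
    isMaxOn_of_hasDerivAt_zero (hstrict m hm).concaveOn (by simp)
      (hρR m hm ▸ (hdiff m (ρR m)).hasDerivAt)
  obtain ⟨ρm, ρp, hIcc, hmono⟩ := enforceable_set_interval_monotone_general hstrict hincr hmax hL
  exact ⟨ρm, ρp, fun m hm => ⟨(hIcc m hm).1, (hIcc m hm).2.1, fun _ => (hIcc m hm).2.2⟩, hmono⟩
end
end

section
/- In the quadratic setup, u_* is continuously differentiable on [0,1]; and at every θ ∈ [0,1] with |θ − ρ_R(θ)| ≠ ℓ, u_* is twice differentiable with u_*''(θ) = 1 if |θ − ρ_R(θ)| < ℓ and u_*''(θ) = a(2 − a) if |θ − ρ_R(θ)| > ℓ. -/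
open Set

noncomputable section

/-- Receiver's preferred decision in the quadratic setup. -/
def rhoR (a b θ : ℝ) : ℝ := a * θ + b

/-- Second-best decision in the quadratic setup with leeway `ℓ`. -/
def rhoStar (a b ℓ θ : ℝ) : ℝ :=
  if ℓ < θ - rhoR a b θ then rhoR a b θ + ℓ
  else if θ - rhoR a b θ < -ℓ then rhoR a b θ - ℓ
  else θ

/-- Joint payoff under the second-best decision in the quadratic setup. -/
def uStar (a b ℓ θ : ℝ) : ℝ := θ * rhoStar a b ℓ θ - (rhoStar a b ℓ θ) ^ 2 / 2

/-
The gap `θ - ρ_*(θ)` equals `S(θ - ρ_R(θ))`, where `S` is soft thresholding at level `ℓ`.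
Completing the square gives `u_*(θ) = θ² / 2 - S(θ - ρ_R(θ))² / 2`. Although `S` has kinks at `±ℓ`,
it vanishes there, so `S²` is differentiable with derivative `2 S`. As `θ - ρ_R(θ)` is affine with
slope `1 - a`, it follows that `u_*'(θ) = θ - (1 - a) S(θ - ρ_R(θ))`, and differentiating once more
away from the kinks, where `S' ∈ {0, 1}`, gives `u_*'' = 1` or `u_*'' = 1 - (1 - a)² = a (2 - a)`.
-/

theorem hasDerivAt_posPart {x : ℝ} (hx : x ≠ 0) :
    HasDerivAt (fun y : ℝ => y⁺) (if 0 < x then 1 else 0) x := by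
  rcases hx.lt_or_gt with hneg | hpos
  · rw [if_neg hneg.not_gt]
    refine (hasDerivAt_const x (0 : ℝ)).congr_of_eventuallyEq ?_
    filter_upwards [Iio_mem_nhds hneg] with y hy
    exact posPart_eq_zero.2 (mem_Iio.1 hy).le
  · rw [if_pos hpos]
    refine (hasDerivAt_id x).congr_of_eventuallyEq ?_
    filter_upwards [Ioi_mem_nhds hpos] with y hy
    exact posPart_eq_self.2 (mem_Ioi.1 hy).le

theorem hasDerivAt_posPart_sq (x : ℝ) : HasDerivAt (fun y : ℝ => y⁺ ^ 2) (2 * x⁺) x := by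
  have hderiv : ∀ y ≠ (0 : ℝ), HasDerivAt (fun y : ℝ => y⁺ ^ 2) (2 * y⁺) y := by
    intro y hy
    refine ((hasDerivAt_posPart hy).pow 2).congr_deriv ?_
    split_ifs with hpos
    · simp
    · simp [posPart_eq_zero.2 (not_lt.1 hpos)]
  exact hasDerivAt_of_hasDerivAt_of_ne' hderiv (continuous_posPart.pow 2).continuousAt
    (continuous_posPart.const_mul 2).continuousAt x

/-- The soft-thresholding operator at level `ℓ`: for `0 ≤ ℓ`, the signed excess of `x` over the
interval `[-ℓ, ℓ]`. -/
def softThreshold (ℓ x : ℝ) : ℝ := (x - ℓ)⁺ - (-x - ℓ)⁺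

theorem continuous_softThreshold (ℓ : ℝ) : Continuous (softThreshold ℓ) :=
  (continuous_posPart.comp (continuous_sub_right ℓ)).sub
    (continuous_posPart.comp ((continuous_sub_right ℓ).comp continuous_neg))

section SoftThreshold

variable {ℓ x : ℝ}

theorem softThreshold_eq_ite (hℓ : 0 ≤ ℓ) :
    softThreshold ℓ x = if ℓ < x then x - ℓ else if x < -ℓ then x + ℓ else 0 := by
  grind [softThreshold, posPart_eq_ite]

theorem softThreshold_sq (hℓ : 0 ≤ ℓ) :
    softThreshold ℓ x ^ 2 = (x - ℓ)⁺ ^ 2 + (-x - ℓ)⁺ ^ 2 := by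
  have hdisjoint : (x - ℓ)⁺ * (-x - ℓ)⁺ = 0 := by
    rcases le_total x 0 with hx | hx
    · rw [posPart_eq_zero.2 (by linarith : x - ℓ ≤ 0), zero_mul]
    · rw [posPart_eq_zero.2 (by linarith : -x - ℓ ≤ 0), mul_zero]
  rw [softThreshold]
  linear_combination (-2) * hdisjoint

theorem hasDerivAt_softThreshold_sq (hℓ : 0 ≤ ℓ) :
    HasDerivAt (fun y => softThreshold ℓ y ^ 2) (2 * softThreshold ℓ x) x := by
  simp only [softThreshold_sq hℓ]
  have hright := (hasDerivAt_posPart_sq (x - ℓ)).comp x ((hasDerivAt_id x).sub_const ℓ)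
  have hleft := (hasDerivAt_posPart_sq (-x - ℓ)).comp x ((hasDerivAt_neg x).sub_const ℓ)
  refine (hright.add hleft).congr_deriv ?_
  rw [softThreshold]
  ring

theorem hasDerivAt_softThreshold (hℓ : 0 ≤ ℓ) (hx : |x| ≠ ℓ) :
    HasDerivAt (softThreshold ℓ) (if |x| < ℓ then 0 else 1) x := by
  have hx_right : x - ℓ ≠ 0 := fun h => hx (by rw [sub_eq_zero.1 h, abs_of_nonneg hℓ])
  have hx_left : -x - ℓ ≠ 0 := fun h => hx (by rw [← abs_neg, sub_eq_zero.1 h, abs_of_nonneg hℓ])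
  have hright := (hasDerivAt_posPart hx_right).comp x ((hasDerivAt_id x).sub_const ℓ)
  have hleft := (hasDerivAt_posPart hx_left).comp x ((hasDerivAt_neg x).sub_const ℓ)
  have hslope : (if 0 < x - ℓ then (1 : ℝ) else 0) * 1 - (if 0 < -x - ℓ then 1 else 0) * -1 =
      if |x| < ℓ then 0 else 1 := by
    grind
  exact (hright.sub hleft).congr_deriv hslope

end SoftThreshold

section QuadraticSetup

variable {a b ℓ θ : ℝ}

theorem hasDerivAt_sub_rhoR : HasDerivAt (fun t => t - rhoR a b t) (1 - a) θ := by
  have hrhoR : HasDerivAt (rhoR a b) a θ :=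
    (((hasDerivAt_id θ).const_mul a).add_const b).congr_deriv (mul_one a)
  exact (hasDerivAt_id θ).sub hrhoR

theorem sub_rhoStar (hℓ : 0 ≤ ℓ) : θ - rhoStar a b ℓ θ = softThreshold ℓ (θ - rhoR a b θ) := by
  rw [softThreshold_eq_ite hℓ, rhoStar]
  split_ifs <;> ring

theorem uStar_eq_sq_sub_softThreshold_sq (hℓ : 0 ≤ ℓ) :
    uStar a b ℓ = fun θ => θ ^ 2 / 2 - softThreshold ℓ (θ - rhoR a b θ) ^ 2 / 2 := by
  funext θ
  rw [← sub_rhoStar hℓ, uStar]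
  ring

theorem hasDerivAt_uStar (hℓ : 0 ≤ ℓ) :
    HasDerivAt (uStar a b ℓ) (θ - (1 - a) * softThreshold ℓ (θ - rhoR a b θ)) θ := by
  have hsq := (hasDerivAt_softThreshold_sq hℓ).comp θ (hasDerivAt_sub_rhoR (a := a) (b := b))
  rw [uStar_eq_sq_sub_softThreshold_sq hℓ]
  refine (((hasDerivAt_pow 2 θ).div_const 2).sub (hsq.div_const 2)).congr_deriv ?_
  push_cast
  ring

theorem uStar_smoothness_general (a b : ℝ) (hℓ : 0 ≤ ℓ) :
    ∃ du : ℝ → ℝ, Continuous du ∧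
      (∀ θ, HasDerivAt (uStar a b ℓ) (du θ) θ) ∧
      ∀ θ, |θ - rhoR a b θ| ≠ ℓ →
        HasDerivAt du (if |θ - rhoR a b θ| < ℓ then 1 else a * (2 - a)) θ := by
  refine ⟨fun θ => θ - (1 - a) * softThreshold ℓ (θ - rhoR a b θ), ?_,
    fun θ => hasDerivAt_uStar hℓ, fun θ hθ => ?_⟩
  · have hgap : Continuous fun θ => θ - rhoR a b θ :=
      continuous_iff_continuousAt.2 fun θ => hasDerivAt_sub_rhoR.continuousAt
    exact continuous_id.sub (((continuous_softThreshold ℓ).comp hgap).const_mul (1 - a))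
  · have hthreshold := (hasDerivAt_softThreshold hℓ hθ).comp θ hasDerivAt_sub_rhoR
    refine ((hasDerivAt_id θ).sub (hthreshold.const_mul (1 - a))).congr_deriv ?_
    split_ifs <;> ring

end QuadraticSetup

/-- in the quadratic setup, `u_*` is continuously differentiable
on `[0,1]`, and at every `θ ∈ [0,1]` with `|θ − ρ_R(θ)| ≠ ℓ`, `u_*` is twice
differentiable with `u_*'' = 1` if `|θ − ρ_R(θ)| < ℓ` and `u_*'' = a(2 − a)` if
`|θ − ρ_R(θ)| > ℓ`. -/
theorem uStar_smoothness (a b ℓ : ℝ) (ha : 0 < a) (hℓ : 0 < ℓ) :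
    ∃ du : ℝ → ℝ,
      ContinuousOn du (Icc (0:ℝ) 1) ∧
      (∀ θ ∈ Icc (0:ℝ) 1, HasDerivAt (uStar a b ℓ) (du θ) θ) ∧
      (∀ θ ∈ Icc (0:ℝ) 1, |θ - rhoR a b θ| ≠ ℓ →
        HasDerivAt du (if |θ - rhoR a b θ| < ℓ then 1 else a * (2 - a)) θ) := by
  obtain ⟨du, hcont, hderiv, hderiv₂⟩ := uStar_smoothness_general a b hℓ.le
  exact ⟨du, hcont.continuousOn, fun θ _ => hderiv θ, fun θ _ => hderiv₂ θ⟩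
end
end

section
/- In the quadratic setup, let F be any cumulative distribution function on [0,1] with strictly positive density, and define the set of extreme states X = {θ ∈ [0,1] : |θ − ρ_R(θ)| > ℓ}. Then there exists an open pooling set P with ∫_0^1 u_*(θ) dG_P(θ) > ∫_0^1 u_*(θ) dF(θ) (i.e., full separation is not optimal for u_*) if and only if X ≠ ∅ and a > 2. -/
open MeasureTheory Set
open scoped Classical

noncomputable section

/-!
Under the prior measure `μ = f dθ` on `[0,1]`, pooling replaces `θ` by its `μ`-average on each of
the countably many components of `P`, so by Jensen's inequality pooling cannot help when `u` is
convex on `[0,1]`, and pooling a single interval on which `u` is strictly concave helps.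

The decision `ρ_*(θ)` is the projection of `θ` onto `[ρ_R(θ) - ℓ, ρ_R(θ) + ℓ]`, and
`θ ρ - ρ² / 2 = θ² / 2 - (θ - ρ)² / 2`, so `u_*(θ)` is the maximum over `|t| ≤ ℓ` of the payoff from
the decision `ρ_R(θ) + t`. Each of these payoffs is quadratic in `θ` with second derivative
`-a (a - 2)`. If `a (a - 2) ≤ 0`, then `u_*` is a maximum of convex functions. If `a (a - 2) > 0`,
then `u_*` is strictly concave near an extreme state, where it is one of the two payoffs
`t = ± ℓ`; without extreme states it is the convex function `θ² / 2`.
-/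

section Topology

theorem nonempty_interior_inter {X : Type*} [TopologicalSpace X] {U s : Set X} (hU : IsOpen U)
    (hs : s ⊆ closure (interior s)) (hUs : (U ∩ s).Nonempty) : (interior (U ∩ s)).Nonempty := by
  rw [interior_inter, hU.interior_eq, ← closure_nonempty_iff]
  exact (hUs.mono (inter_subset_inter_right U hs)).mono hU.inter_closure

theorem nonempty_interior_connectedComponentIn_inter {E : Type*} [SeminormedAddCommGroup E]
    [NormedSpace ℝ E] {U s : Set E} {x : E} (hU : IsOpen U) (hsc : Convex ℝ s)
    (hs : s ⊆ closure (interior s)) (hx : x ∈ U ∩ s) :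
    (interior (connectedComponentIn (U ∩ s) x)).Nonempty := by
  obtain ⟨ε, hε, hball⟩ := Metric.isOpen_iff.1 hU x hx.1
  have hxball : x ∈ Metric.ball x ε ∩ s := ⟨Metric.mem_ball_self hε, hx.2⟩
  have hsub : Metric.ball x ε ∩ s ⊆ connectedComponentIn (U ∩ s) x :=
    ((convex_ball x ε).inter hsc).isPreconnected.subset_connectedComponentIn hxball
      (inter_subset_inter_left s hball)
  exact (nonempty_interior_inter Metric.isOpen_ball hs ⟨x, hxball⟩).mono (interior_mono hsub)

theorem exists_Icc_subset_of_nonempty_interior {α : Type*} [LinearOrder α] [TopologicalSpace α]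
    [OrderTopology α] [DenselyOrdered α] [NoMinOrder α] [NoMaxOrder α] {s : Set α}
    (hs : (interior s).Nonempty) : ∃ p q, p < q ∧ Icc p q ⊆ s := by
  obtain ⟨y, hy⟩ := hs
  obtain ⟨p, q, -, hnhds, hsub⟩ :=
    exists_Icc_mem_subset_of_mem_nhds (mem_interior_iff_mem_nhds.1 hy)
  rw [Icc_mem_nhds_iff] at hnhds
  exact ⟨p, q, hnhds.1.trans hnhds.2, hsub⟩

theorem Ioo_csInf_csSup_ae_eq_of_isConnected {μ : Measure ℝ} [NullSingletonClass μ] {C : Set ℝ}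
    (hC : IsConnected C) (hb : BddBelow C) (ha : BddAbove C) :
    Ioo (sInf C) (sSup C) =ᵐ[μ] C :=
  (hC.Ioo_csInf_csSup_subset hb ha).eventuallyLE.antisymm <|
    (subset_Icc_csInf_csSup hb ha).eventuallyLE.trans Ioo_ae_eq_Icc.symm.le

/-- The connected components of `P`; for a pooling set, these are the pooled intervals. -/
def components (P : Set ℝ) : Set (Set ℝ) := connectedComponentIn P '' P

theorem pairwiseDisjoint_components (P : Set ℝ) : (components P).PairwiseDisjoint id := by
  rintro _ ⟨x, -, rfl⟩ _ ⟨y, -, rfl⟩ hne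
  refine disjoint_left.2 fun z hzx hzy => hne ?_
  exact (connectedComponentIn_eq hzx).trans (connectedComponentIn_eq hzy).symm

theorem iUnion_components (P : Set ℝ) : ⋃ C : components P, (C : Set ℝ) = P := by
  rw [← sUnion_eq_iUnion]
  refine (sUnion_subset ?_).antisymm fun x hx => ?_
  · rintro _ ⟨x, -, rfl⟩
    exact connectedComponentIn_subset P x
  · exact ⟨_, mem_image_of_mem _ hx, mem_connectedComponentIn hx⟩

theorem measurableSet_of_mem_components {P C : Set ℝ} (hC : C ∈ components P) :
    MeasurableSet C := by
  obtain ⟨x, -, rfl⟩ := hC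
  exact isPreconnected_connectedComponentIn.ordConnected.measurableSet

end Topology

section Jensen

variable {Ω : Type*} [MeasurableSpace Ω] {μ : Measure Ω} [IsFiniteMeasure μ]
  {E : Type*} [NormedAddCommGroup E] [NormedSpace ℝ E] [CompleteSpace E]
  {X Y : Ω → E} {u : E → ℝ} {s : Set E}

theorem measureReal_mul_map_setAverage_le (hu : ConvexOn ℝ s u) (huc : ContinuousOn u s)
    (hs : IsClosed s) {t : Set Ω} (hXs : ∀ᵐ ω ∂μ.restrict t, X ω ∈ s) (hX : IntegrableOn X t μ)
    (huX : IntegrableOn (u ∘ X) t μ) :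
    μ.real t * u (⨍ ω in t, X ω ∂μ) ≤ ∫ ω in t, u (X ω) ∂μ := by
  rw [← measure_smul_setAverage _ (measure_ne_top μ t), smul_eq_mul]
  rcases eq_or_ne (μ t) 0 with ht | ht
  · simp [measureReal_def, ht]
  · gcongr
    exact hu.map_set_average_le huc hs ht (measure_ne_top μ t) hXs hX huX

theorem setIntegral_lt_measureReal_mul_map_setAverage (hu : StrictConcaveOn ℝ s u)
    (huc : ContinuousOn u s) (hs : IsClosed s) {t : Set Ω} (hXs : ∀ᵐ ω ∂μ.restrict t, X ω ∈ s)
    (hX : IntegrableOn X t μ) (huX : IntegrableOn (u ∘ X) t μ)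
    (hXne : ∀ c, ¬ X =ᵐ[μ.restrict t] Function.const Ω c) :
    ∫ ω in t, u (X ω) ∂μ < μ.real t * u (⨍ ω in t, X ω ∂μ) := by
  have ht : μ t ≠ 0 := fun ht =>
    hXne 0 (by rw [Measure.restrict_eq_zero.2 ht, ae_zero]; trivial)
  rw [← measure_smul_setAverage _ (measure_ne_top μ t), smul_eq_mul]
  have : 0 < μ.real t := ENNReal.toReal_pos ht (measure_ne_top μ t)
  gcongr
  exact (hu.ae_eq_const_or_lt_map_average huc hs hXs hX huX).resolve_left (hXne _)

theorem integral_map_le_of_eq_setAverage {ι : Type*} [Countable ι] {C : ι → Set Ω}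
    (hC : ∀ i, MeasurableSet (C i)) (hdisj : Pairwise (Function.onFun Disjoint C))
    (hYC : ∀ i, ∀ ω ∈ C i, Y ω = ⨍ ω' in C i, X ω' ∂μ) (hYX : ∀ ω ∉ ⋃ i, C i, Y ω = X ω)
    (hu : ConvexOn ℝ s u) (huc : ContinuousOn u s) (hs : IsClosed s)
    (hXs : ∀ᵐ ω ∂μ, X ω ∈ s) (hX : Integrable X μ) (huX : Integrable (u ∘ X) μ)
    (huY : Integrable (u ∘ Y) μ) : ∫ ω, u (Y ω) ∂μ ≤ ∫ ω, u (X ω) ∂μ := by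
  have hU : MeasurableSet (⋃ i, C i) := .iUnion hC
  have hcell : ∀ i, ∫ ω in C i, u (Y ω) ∂μ ≤ ∫ ω in C i, u (X ω) ∂μ := fun i => by
    rw [setIntegral_congr_fun (hC i) fun ω hω => congrArg u (hYC i ω hω), setIntegral_const,
      smul_eq_mul]
    exact measureReal_mul_map_setAverage_le hu huc hs (ae_restrict_of_ae hXs) hX.integrableOn
      huX.integrableOn
  have hpool : ∫ ω in ⋃ i, C i, u (Y ω) ∂μ ≤ ∫ ω in ⋃ i, C i, u (X ω) ∂μ :=
    hasSum_le hcell (hasSum_integral_iUnion hC hdisj huY.integrableOn)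
      (hasSum_integral_iUnion hC hdisj huX.integrableOn)
  have hsep : ∫ ω in (⋃ i, C i)ᶜ, u (Y ω) ∂μ = ∫ ω in (⋃ i, C i)ᶜ, u (X ω) ∂μ :=
    setIntegral_congr_fun hU.compl fun ω hω => congrArg u (hYX ω hω)
  calc ∫ ω, u (Y ω) ∂μ
      = ∫ ω in ⋃ i, C i, u (Y ω) ∂μ + ∫ ω in (⋃ i, C i)ᶜ, u (Y ω) ∂μ :=
        (integral_add_compl hU huY).symm
    _ ≤ ∫ ω in ⋃ i, C i, u (X ω) ∂μ + ∫ ω in (⋃ i, C i)ᶜ, u (X ω) ∂μ := by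
        rw [hsep]; gcongr
    _ = ∫ ω, u (X ω) ∂μ := integral_add_compl hU huX

theorem integral_lt_integral_map_of_eq_setAverage {t : Set Ω} (ht : MeasurableSet t)
    (hYt : ∀ ω ∈ t, Y ω = ⨍ ω' in t, X ω' ∂μ) (hYX : ∀ ω ∉ t, Y ω = X ω)
    (hu : StrictConcaveOn ℝ s u) (huc : ContinuousOn u s) (hs : IsClosed s)
    (hXs : ∀ᵐ ω ∂μ.restrict t, X ω ∈ s) (hX : IntegrableOn X t μ) (huX : Integrable (u ∘ X) μ)
    (huY : Integrable (u ∘ Y) μ) (hXne : ∀ c, ¬ X =ᵐ[μ.restrict t] Function.const Ω c) :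
    ∫ ω, u (X ω) ∂μ < ∫ ω, u (Y ω) ∂μ := by
  have hpool : ∫ ω in t, u (X ω) ∂μ < ∫ ω in t, u (Y ω) ∂μ := by
    rw [setIntegral_congr_fun ht fun ω hω => congrArg u (hYt ω hω), setIntegral_const,
      smul_eq_mul]
    exact setIntegral_lt_measureReal_mul_map_setAverage hu huc hs hXs hX huX.integrableOn hXne
  have hsep : ∫ ω in tᶜ, u (Y ω) ∂μ = ∫ ω in tᶜ, u (X ω) ∂μ :=
    setIntegral_congr_fun ht.compl fun ω hω => congrArg u (hYX ω hω)
  calc ∫ ω, u (X ω) ∂μ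
      = ∫ ω in t, u (X ω) ∂μ + ∫ ω in tᶜ, u (X ω) ∂μ := (integral_add_compl ht huX).symm
    _ < ∫ ω in t, u (Y ω) ∂μ + ∫ ω in tᶜ, u (Y ω) ∂μ := by
        rw [hsep]; gcongr
    _ = ∫ ω, u (Y ω) ∂μ := integral_add_compl ht huY

end Jensen

theorem not_ae_eq_const_of_measure_ne_zero {α : Type*} [MeasurableSpace α] {ν : Measure α}
    [NullSingletonClass ν] {t : Set α} (ht : ν t ≠ 0) (c : α) :
    ¬ id =ᵐ[ν.restrict t] Function.const α c := by
  have : (ae (ν.restrict t)).NeBot := ae_restrict_neBot.2 ht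
  intro hc
  obtain ⟨x, hxc, hne⟩ := (hc.and ((ν.restrict t).ae_ne c)).exists
  exact hne hxc

theorem aestronglyMeasurable_of_const_on_iUnion {Ω β ι : Type*} [MeasurableSpace Ω]
    {μ : Measure Ω} [TopologicalSpace β] [TopologicalSpace.PseudoMetrizableSpace β] [Countable ι]
    {C : ι → Set Ω} (hC : ∀ i, MeasurableSet (C i)) {g h : Ω → β} {c : ι → β}
    (hgC : ∀ i, ∀ ω ∈ C i, g ω = c i) (hgh : ∀ ω ∉ ⋃ i, C i, g ω = h ω)
    (hh : AEStronglyMeasurable h μ) : AEStronglyMeasurable g μ := by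
  have hU : MeasurableSet (⋃ i, C i) := .iUnion hC
  rw [← Measure.restrict_univ (μ := μ), ← union_compl_self (⋃ i, C i),
    aestronglyMeasurable_union_iff, aestronglyMeasurable_iUnion_iff]
  refine ⟨fun i => ?_, ?_⟩
  · exact aestronglyMeasurable_const.congr
      (ae_restrict_of_forall_mem (hC i) fun ω hω => (hgC i ω hω).symm)
  · exact hh.restrict.congr (ae_restrict_of_forall_mem hU.compl fun ω hω => (hgh ω hω).symm)

/-- The prior: the probability measure on `[0,1]` with density `f`, as a measure on `ℝ`. -/
def prior (f : ℝ → ℝ) : Measure ℝ :=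
  (volume.restrict (Icc 0 1)).withDensity fun θ => ENNReal.ofReal (f θ)

instance (f : ℝ → ℝ) : NullSingletonClass (prior f) :=
  inferInstanceAs (NullSingletonClass (Measure.withDensity _ _))

theorem ae_prior_mem_Icc (f : ℝ → ℝ) : ∀ᵐ θ ∂prior f, θ ∈ Icc (0 : ℝ) 1 :=
  (withDensity_absolutelyContinuous _ _).ae_le (ae_restrict_mem measurableSet_Icc)

namespace IsDensity

variable {f : ℝ → ℝ} (hf : IsDensity f)

include hf

theorem setIntegral_prior {s : Set ℝ} (hs : MeasurableSet s) (hs01 : s ⊆ Icc 0 1) (g : ℝ → ℝ) :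
    ∫ θ in s, g θ ∂prior f = ∫ θ in s, g θ * f θ := by
  have hfm :
      AEMeasurable (fun θ => ENNReal.ofReal (f θ)) ((volume.restrict (Icc 0 1)).restrict s) :=
    hf.2.1.aestronglyMeasurable.aemeasurable.restrict.ennreal_ofReal
  rw [prior, setIntegral_withDensity_eq_setIntegral_toReal_smul₀ hfm
    (.of_forall fun _ => ENNReal.ofReal_lt_top) g hs, Measure.restrict_restrict_of_subset hs01]
  refine setIntegral_congr_fun hs fun θ hθ => ?_
  simp only [ENNReal.toReal_ofReal (hf.1 θ (hs01 hθ)).le, smul_eq_mul, mul_comm]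

theorem integral_prior (g : ℝ → ℝ) : ∫ θ, g θ ∂prior f = ∫ θ in (0 : ℝ)..1, g θ * f θ := by
  rw [← Measure.restrict_eq_self_of_ae_mem (ae_prior_mem_Icc f),
    hf.setIntegral_prior measurableSet_Icc Subset.rfl, integral_Icc_eq_integral_Ioc,
    intervalIntegral.integral_of_le zero_le_one]

theorem isProbabilityMeasure_prior : IsProbabilityMeasure (prior f) := by
  have : IsFiniteMeasure (prior f) := isFiniteMeasure_withDensity_ofReal hf.2.1.2
  have hmass := hf.integral_prior fun _ => 1
  simp only [one_mul, hf.2.2, integral_const, smul_eq_mul, mul_one] at hmass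
  exact isProbabilityMeasure_iff_real.2 hmass

theorem prior_ne_zero {s : Set ℝ} (hs01 : s ⊆ Icc 0 1) (hs : (interior s).Nonempty) :
    prior f s ≠ 0 := by
  have hfm : AEMeasurable (fun θ => ENNReal.ofReal (f θ)) (volume.restrict (Icc 0 1)) :=
    hf.2.1.aestronglyMeasurable.aemeasurable.ennreal_ofReal
  have hsupp : {θ | ENNReal.ofReal (f θ) ≠ 0} ∩ s = s :=
    inter_eq_right.2 fun θ hθ => (ENNReal.ofReal_pos.2 (hf.1 θ (hs01 hθ))).ne'
  rw [prior, Ne, withDensity_apply_eq_zero' hfm, hsupp, Measure.restrict_eq_self _ hs01]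
  exact (Measure.measure_pos_of_nonempty_interior volume hs).ne'

theorem integrable_prior_of_continuousOn {g : ℝ → ℝ} (hg : ContinuousOn g (Icc 0 1)) :
    Integrable g (prior f) := by
  have := hf.isProbabilityMeasure_prior
  rw [← Measure.restrict_eq_self_of_ae_mem (ae_prior_mem_Icc f)]
  exact hg.integrableOn_Icc

theorem setAverage_prior_mem {s t : Set ℝ} (hs01 : s ⊆ Icc 0 1) (hs : (interior s).Nonempty)
    (hst : s ⊆ t) (hsm : MeasurableSet s) (htc : Convex ℝ t) (ht : IsClosed t) :
    ⨍ θ in s, θ ∂prior f ∈ t := by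
  have := hf.isProbabilityMeasure_prior
  exact htc.set_average_mem ht (hf.prior_ne_zero hs01 hs) (measure_ne_top _ _)
    (ae_restrict_of_forall_mem hsm hst)
    (hf.integrable_prior_of_continuousOn continuousOn_id).integrableOn

theorem condMean_eq_setAverage_prior {x y : ℝ} (h0 : 0 ≤ x) (hxy : x ≤ y) (h1 : y ≤ 1) :
    condMean f x y = ⨍ θ in Ioo x y, θ ∂prior f := by
  have := hf.isProbabilityMeasure_prior
  have hint (g : ℝ → ℝ) : ∫ θ in Ioo x y, g θ ∂prior f = ∫ θ in x..y, g θ * f θ := by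
    rw [hf.setIntegral_prior measurableSet_Ioo (Ioo_subset_Icc_self.trans (Icc_subset_Icc h0 h1)),
      ← integral_Ioc_eq_integral_Ioo, intervalIntegral.integral_of_le hxy]
  have hmass : (prior f).real (Ioo x y) = ∫ θ in x..y, f θ := by
    simpa using hint fun _ => 1
  rw [setAverage_eq, hmass, hint fun θ => θ, smul_eq_mul, inv_mul_eq_div, condMean]

end IsDensity

namespace IsPoolingSet

variable {P C : Set ℝ} (hP : IsPoolingSet P)

include hP

theorem subset_Icc_s17 : P ⊆ Icc 0 1 := by
  obtain ⟨U, -, rfl⟩ := hP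
  exact inter_subset_right

theorem subset_Icc_of_mem_components (hC : C ∈ components P) : C ⊆ Icc 0 1 := by
  obtain ⟨x, -, rfl⟩ := hC
  exact (connectedComponentIn_subset P x).trans hP.subset_Icc_s17

theorem nonempty_interior_of_mem_components (hC : C ∈ components P) : (interior C).Nonempty := by
  obtain ⟨x, hx, rfl⟩ := hC
  obtain ⟨U, hU, rfl⟩ := hP
  refine nonempty_interior_connectedComponentIn_inter hU (convex_Icc 0 1) ?_ hx
  rw [closure_interior_Icc zero_ne_one]

theorem countable_components_s17 : (components P).Countable :=
  (pairwiseDisjoint_components P).countable_of_nonempty_interior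
    fun _ hC => hP.nonempty_interior_of_mem_components hC

end IsPoolingSet

section Pooling

variable {f u : ℝ → ℝ} {P C : Set ℝ} {θ : ℝ}

theorem poolMean_of_notMem (hθ : θ ∉ P) : poolMean f P θ = θ := if_neg hθ

theorem poolMean_eq_setAverage_prior (hf : IsDensity f) (hP : IsPoolingSet P)
    (hC : C ∈ components P) (hθ : θ ∈ C) : poolMean f P θ = ⨍ θ' in C, θ' ∂prior f := by
  have hC01 : C ⊆ Icc 0 1 := hP.subset_Icc_of_mem_components hC
  have hb : BddBelow C := bddBelow_Icc.mono hC01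
  have ha : BddAbove C := bddAbove_Icc.mono hC01
  have hne : C.Nonempty := ⟨θ, hθ⟩
  obtain ⟨x, -, rfl⟩ := hC
  rw [poolMean, if_pos (connectedComponentIn_subset P x hθ), compInf, compSup,
    ← connectedComponentIn_eq hθ, hf.condMean_eq_setAverage_prior
      (le_csInf hne fun _ h => (hC01 h).1) (csInf_le_csSup hne hb ha)
      (csSup_le hne fun _ h => (hC01 h).2)]
  exact setAverage_congr
    (Ioo_csInf_csSup_ae_eq_of_isConnected ⟨hne, isPreconnected_connectedComponentIn⟩ hb ha)

theorem poolMean_mem_Icc (hf : IsDensity f) (hP : IsPoolingSet P) (hθ : θ ∈ Icc 0 1) :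
    poolMean f P θ ∈ Icc 0 1 := by
  by_cases hθP : θ ∈ P
  · have hC : connectedComponentIn P θ ∈ components P := mem_image_of_mem _ hθP
    have hC01 := hP.subset_Icc_of_mem_components hC
    rw [poolMean_eq_setAverage_prior hf hP hC (mem_connectedComponentIn hθP)]
    exact hf.setAverage_prior_mem hC01 (hP.nonempty_interior_of_mem_components hC) hC01
      (measurableSet_of_mem_components hC) (convex_Icc 0 1) isClosed_Icc
  · rwa [poolMean_of_notMem hθP]

theorem integrable_comp_poolMean (hf : IsDensity f) (hP : IsPoolingSet P)
    (hu : ContinuousOn u (Icc 0 1)) : Integrable (u ∘ poolMean f P) (prior f) := by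
  have := hf.isProbabilityMeasure_prior
  have := hP.countable_components_s17.to_subtype
  have hmeas : AEStronglyMeasurable (u ∘ poolMean f P) (prior f) :=
    aestronglyMeasurable_of_const_on_iUnion
      (fun C : components P => measurableSet_of_mem_components C.2)
      (fun C θ hθ => congrArg u (poolMean_eq_setAverage_prior hf hP C.2 hθ))
      (fun θ hθ => congrArg u (poolMean_of_notMem (iUnion_components P ▸ hθ)))
      (hf.integrable_prior_of_continuousOn hu).aestronglyMeasurable
  obtain ⟨M, hM⟩ := isCompact_Icc.exists_bound_of_continuousOn hu
  refine .of_bound hmeas M ?_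
  filter_upwards [ae_prior_mem_Icc f] with θ hθ using hM _ (poolMean_mem_Icc hf hP hθ)

theorem poolValue_eq_integral_prior (hf : IsDensity f) :
    poolValue f u P = ∫ θ, u (poolMean f P θ) ∂prior f :=
  (hf.integral_prior _).symm

theorem poolValue_empty (hf : IsDensity f) : poolValue f u ∅ = ∫ θ, u θ ∂prior f := by
  simp only [poolValue_eq_integral_prior hf, poolMean_of_notMem (notMem_empty _)]

theorem poolValue_le_poolValue_empty (hf : IsDensity f) (hP : IsPoolingSet P)
    (hu : ConvexOn ℝ (Icc 0 1) u) (huc : ContinuousOn u (Icc 0 1)) :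
    poolValue f u P ≤ poolValue f u ∅ := by
  have := hf.isProbabilityMeasure_prior
  have := hP.countable_components_s17.to_subtype
  rw [poolValue_eq_integral_prior hf, poolValue_empty hf]
  exact integral_map_le_of_eq_setAverage
    (fun C : components P => measurableSet_of_mem_components C.2)
    (pairwiseDisjoint_components P).subtype
    (fun C θ hθ => poolMean_eq_setAverage_prior hf hP C.2 hθ)
    (fun θ hθ => poolMean_of_notMem (iUnion_components P ▸ hθ))
    hu huc isClosed_Icc (ae_prior_mem_Icc f)
    (hf.integrable_prior_of_continuousOn continuousOn_id)
    (hf.integrable_prior_of_continuousOn huc) (integrable_comp_poolMean hf hP huc)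

theorem isPoolingSet_Ioo {p q : ℝ} (hpq01 : Ioo p q ⊆ Icc 0 1) : IsPoolingSet (Ioo p q) :=
  ⟨Ioo p q, isOpen_Ioo, (inter_eq_left.2 hpq01).symm⟩

theorem poolValue_empty_lt_poolValue_Ioo (hf : IsDensity f) {p q : ℝ} (hpq : p < q)
    (hpq01 : Icc p q ⊆ Icc 0 1) (hu : StrictConcaveOn ℝ (Icc p q) u)
    (huc : ContinuousOn u (Icc 0 1)) : poolValue f u ∅ < poolValue f u (Ioo p q) := by
  have := hf.isProbabilityMeasure_prior
  have hsub : Ioo p q ⊆ Icc 0 1 := Ioo_subset_Icc_self.trans hpq01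
  have hP : IsPoolingSet (Ioo p q) := isPoolingSet_Ioo hsub
  have hmem : Ioo p q ∈ components (Ioo p q) := by
    obtain ⟨x, hx⟩ := nonempty_Ioo.2 hpq
    exact ⟨x, hx, isPreconnected_Ioo.connectedComponentIn hx⟩
  have hne : prior f (Ioo p q) ≠ 0 := hf.prior_ne_zero hsub (by simpa using hpq)
  rw [poolValue_empty hf, poolValue_eq_integral_prior hf]
  exact integral_lt_integral_map_of_eq_setAverage measurableSet_Ioo
    (fun θ hθ => poolMean_eq_setAverage_prior hf hP hmem hθ) (fun θ hθ => poolMean_of_notMem hθ)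
    hu (huc.mono hpq01) isClosed_Icc
    (ae_restrict_of_forall_mem measurableSet_Ioo fun _ h => Ioo_subset_Icc_self h)
    (hf.integrable_prior_of_continuousOn continuousOn_id).integrableOn
    (hf.integrable_prior_of_continuousOn huc) (integrable_comp_poolMean hf hP huc)
    (not_ae_eq_const_of_measure_ne_zero hne)

end Pooling

theorem convexOn_of_isLUB {E ι : Type*} [AddCommGroup E] [Module ℝ E] {s : Set E} {T : Set ι}
    {q : ι → E → ℝ} {g : E → ℝ} (hs : Convex ℝ s) (hq : ∀ t ∈ T, ConvexOn ℝ s (q t))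
    (hg : ∀ x ∈ s, IsLUB ((fun t => q t x) '' T) (g x)) : ConvexOn ℝ s g := by
  refine ⟨hs, fun x hx y hy α β hα hβ hαβ => ?_⟩
  refine (isLUB_le_iff (hg _ (hs hx hy hα hβ hαβ))).2 ?_
  rintro _ ⟨t, ht, rfl⟩
  have hqx : q t x ≤ g x := (hg x hx).1 (mem_image_of_mem _ ht)
  have hqy : q t y ≤ g y := (hg y hy).1 (mem_image_of_mem _ ht)
  exact ((hq t ht).2 hx hy hα hβ hαβ).trans (by gcongr)

section Quadratic

variable {a b ℓ t : ℝ}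

/-- The joint payoff in state `θ` from the decision `ρ_R(θ) + t`; the decisions available under
leeway `ℓ` are those with `|t| ≤ ℓ`. -/
def offsetPayoff (a b t θ : ℝ) : ℝ := θ * (rhoR a b θ + t) - (rhoR a b θ + t) ^ 2 / 2

theorem offsetPayoff_convex_combination {α β : ℝ} (hαβ : α + β = 1) (x y : ℝ) :
    offsetPayoff a b t (α * x + β * y) = α * offsetPayoff a b t x + β * offsetPayoff a b t y
      + a * (a - 2) / 2 * (α * β * (x - y) ^ 2) := by
  obtain rfl : β = 1 - α := by linarith
  simp only [offsetPayoff, rhoR]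
  ring

theorem convexOn_offsetPayoff (ha : a * (a - 2) ≤ 0) : ConvexOn ℝ univ (offsetPayoff a b t) := by
  refine ⟨convex_univ, fun x _ y _ α β hα hβ hαβ => ?_⟩
  have : 0 ≤ α * β * (x - y) ^ 2 := by positivity
  simp only [smul_eq_mul, offsetPayoff_convex_combination hαβ]
  nlinarith

theorem strictConcaveOn_offsetPayoff (ha : 0 < a * (a - 2)) :
    StrictConcaveOn ℝ univ (offsetPayoff a b t) := by
  refine ⟨convex_univ, fun x _ y _ hxy α β hα hβ hαβ => ?_⟩
  have : 0 < (x - y) ^ 2 := sq_pos_iff.2 (sub_ne_zero.2 hxy)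
  simp only [smul_eq_mul, offsetPayoff_convex_combination hαβ]
  have : 0 < a * (a - 2) / 2 * (α * β * (x - y) ^ 2) := by positivity
  linarith

theorem rhoStar_eq_max_min (hℓ : 0 ≤ ℓ) (θ : ℝ) :
    rhoStar a b ℓ θ = max (rhoR a b θ - ℓ) (min (rhoR a b θ + ℓ) θ) := by
  grind [rhoStar]

theorem continuous_uStar (hℓ : 0 ≤ ℓ) : Continuous (uStar a b ℓ) := by
  have hR : Continuous (rhoR a b) := by unfold rhoR; fun_prop
  unfold uStar
  simp only [rhoStar_eq_max_min hℓ]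
  fun_prop

theorem isGreatest_uStar (hℓ : 0 ≤ ℓ) (θ : ℝ) :
    IsGreatest ((fun t => offsetPayoff a b t θ) '' Icc (-ℓ) ℓ) (uStar a b ℓ θ) := by
  constructor
  · refine ⟨rhoStar a b ℓ θ - rhoR a b θ, ?_, by simp [offsetPayoff, uStar]⟩
    grind [rhoStar]
  · rintro _ ⟨t, ht, rfl⟩
    have hdist : (θ - rhoStar a b ℓ θ) ^ 2 ≤ (θ - (rhoR a b θ + t)) ^ 2 := by
      rw [sq_le_sq, rhoStar]
      grind
    simp only [offsetPayoff, uStar]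
    linarith

theorem convexOn_uStar (hℓ : 0 ≤ ℓ) (ha : a * (a - 2) ≤ 0) : ConvexOn ℝ univ (uStar a b ℓ) :=
  convexOn_of_isLUB convex_univ (fun _ _ => convexOn_offsetPayoff ha)
    fun θ _ => (isGreatest_uStar hℓ θ).isLUB

theorem uStar_of_abs_sub_le {θ : ℝ} (h : |θ - rhoR a b θ| ≤ ℓ) : uStar a b ℓ θ = θ ^ 2 / 2 := by
  rw [abs_le] at h
  rw [uStar, rhoStar, if_neg h.2.not_gt, if_neg h.1.not_gt]
  ring

theorem convexOn_uStar_of_forall_abs_sub_le {s : Set ℝ} (hs : Convex ℝ s)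
    (h : ∀ θ ∈ s, |θ - rhoR a b θ| ≤ ℓ) : ConvexOn ℝ s (uStar a b ℓ) := by
  have hsq : ConvexOn ℝ s fun θ : ℝ => (1 / 2 : ℝ) • θ ^ 2 :=
    (even_two.convexOn_pow.subset (subset_univ s) hs).smul (by norm_num)
  refine hsq.congr fun θ hθ => ?_
  simp only [uStar_of_abs_sub_le (h θ hθ), smul_eq_mul]
  ring

theorem exists_Icc_eqOn_uStar_offsetPayoff {s : Set ℝ} (hs : s ⊆ closure (interior s))
    (hℓ : 0 ≤ ℓ) (hX : ∃ θ ∈ s, ℓ < |θ - rhoR a b θ|) :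
    ∃ p q t, p < q ∧ Icc p q ⊆ s ∧ EqOn (uStar a b ℓ) (offsetPayoff a b t) (Icc p q) := by
  have hcont : Continuous fun θ => θ - rhoR a b θ := by unfold rhoR; fun_prop
  obtain ⟨x, hxs, hx⟩ := hX
  rcases lt_abs.1 hx with hx | hx
  · obtain ⟨p, q, hpq, hsub⟩ := exists_Icc_subset_of_nonempty_interior
      (nonempty_interior_inter (isOpen_lt continuous_const hcont) hs ⟨x, hx, hxs⟩)
    refine ⟨p, q, ℓ, hpq, fun θ hθ => (hsub hθ).2, fun θ hθ => ?_⟩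
    have hθX : ℓ < θ - rhoR a b θ := (hsub hθ).1
    rw [uStar, rhoStar, if_pos hθX, offsetPayoff]
  · obtain ⟨p, q, hpq, hsub⟩ := exists_Icc_subset_of_nonempty_interior
      (nonempty_interior_inter (isOpen_lt continuous_const hcont.neg) hs ⟨x, hx, hxs⟩)
    refine ⟨p, q, -ℓ, hpq, fun θ hθ => (hsub hθ).2, fun θ hθ => ?_⟩
    have hθX : ℓ < -(θ - rhoR a b θ) := (hsub hθ).1
    rw [uStar, rhoStar, if_neg (by linarith), if_pos (by linarith), offsetPayoff,
      ← sub_eq_add_neg]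

end Quadratic

theorem pooling_beneficial_iff_general (a b ℓ : ℝ) (hℓ : 0 ≤ ℓ) (f : ℝ → ℝ) (hf : IsDensity f) :
    (∃ P : Set ℝ, IsPoolingSet P ∧ poolValue f (uStar a b ℓ) ∅ < poolValue f (uStar a b ℓ) P)
      ↔ (∃ θ ∈ Icc (0 : ℝ) 1, ℓ < |θ - rhoR a b θ|) ∧ 0 < a * (a - 2) := by
  have huc : ContinuousOn (uStar a b ℓ) (Icc 0 1) := (continuous_uStar hℓ).continuousOn
  constructor
  · rintro ⟨P, hP, hlt⟩
    have hnot : ¬ ConvexOn ℝ (Icc 0 1) (uStar a b ℓ) := fun hu =>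
      hlt.not_ge (poolValue_le_poolValue_empty hf hP hu huc)
    constructor
    · contrapose! hnot
      exact convexOn_uStar_of_forall_abs_sub_le (convex_Icc 0 1) hnot
    · contrapose! hnot
      exact (convexOn_uStar hℓ hnot).subset (subset_univ _) (convex_Icc 0 1)
  · rintro ⟨hX, ha⟩
    obtain ⟨p, q, t, hpq, hpq01, heq⟩ :=
      exists_Icc_eqOn_uStar_offsetPayoff (closure_interior_Icc zero_ne_one).ge hℓ hX
    have hu : StrictConcaveOn ℝ (Icc p q) (uStar a b ℓ) :=
      ((strictConcaveOn_offsetPayoff ha).subset (subset_univ _) (convex_Icc p q)).congr heq.symm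
    exact ⟨Ioo p q, isPoolingSet_Ioo (Ioo_subset_Icc_self.trans hpq01),
      poolValue_empty_lt_poolValue_Ioo hf hpq hpq01 hu huc⟩

/-- in the quadratic setup, full separation is not optimal for
`u_*` (some pooling set yields a strictly larger value) if and only if the set
of extreme states `X = {θ ∈ [0,1] : |θ − ρ_R(θ)| > ℓ}` is nonempty and the
receiver is highly responsive (`a > 2`). -/
theorem pooling_beneficial_iff (a b ℓ : ℝ) (ha : 0 < a) (hℓ : 0 < ℓ)
    (f : ℝ → ℝ) (hf : IsDensity f) :
    (∃ P : Set ℝ, IsPoolingSet P ∧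
        poolValue f (uStar a b ℓ) (∅ : Set ℝ) < poolValue f (uStar a b ℓ) P)
      ↔ ((∃ θ ∈ Icc (0:ℝ) 1, ℓ < |θ - rhoR a b θ|) ∧ 2 < a) := by
  rw [pooling_beneficial_iff_general a b ℓ hℓ.le f hf, mul_pos_iff_of_pos_left ha, sub_pos]
end
end
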